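/- Let k be a positive integer and let (G, x, y) be a 2-connected rooted graph. If every vertex v of G other than x and y has degree at least 2k − 1 in G, then G contains k paths from x to y satisfying the length condition or the semi-length condition. -/

import Mathlib

/-!
The statement is proved by induction in a form with weights. An *instance* consists of a vertex
set `U`, the set `A` of vertices joined to the source, and for each vertex `u` a set
`B u ⊆ {0, 2}` of offsets, thought of as the different ways to continue from `u` to the target;
its lengths are `n + o` for a path with `n` edges inside `U` from `A` to some `u` and an offset
`o ∈ B u`. If the instance is rooted 2-connected and each vertex has weighted degree (neighbours
in `U`, plus one if it is in `A`, plus `|B u|`) at least `d`, then its lengths contain `d - 1`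
consecutive integers or `⌈d / 2⌉` terms of an arithmetic progression with difference `2`
(`W_all`). With `U = V \ {x, y}`, all offsets `0` and `d = 2k - 1`, this yields the semi-length
condition in the first case, from the lengths `l, l + 1, l + 3, l + 5, …`, and the length
condition in the second.

For the induction step take a largest *core* `K` not containing all target vertices: a complete
bipartite graph with sides `S` and `T`, where `|T| = |S| + 1` and `T ⊆ A`, possibly with one more
vertex `v ∈ A` joined to everything. Paths that alternate between the sides realise many lengths
from `A` to each vertex of the core. By maximality a vertex outside `K` misses some vertex of `K`
or is not in `A`, so in passing to a piece of the graph outside `K` its degree drops by no more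
than what the variety of paths in `K` makes up for (`core_lemma`, with the arithmetic in `P.gain`).

Some situations need another argument.
* The vertex that would enlarge `K` may be the only target vertex outside `K`. It then serves as
  the target of a smaller instance (`Core.beta`), unless all its neighbours are in `K`; in that
  case its degree is small and the paths inside `K` are enough (`Inst.inside`).
* If `|S| = 1`, the paths to the single vertex `s` of `S` have too few lengths. A piece attached
  only to `s` is solved with source and target exchanged, leaving it directly or by way of `s` and
  a vertex of `T` being the offsets `0` and `2` (`piece_three`); failing that, the graph is cut
  at `s` and the lengths on the two sides are added (`exc_lemma`, `P.comb`).
* If `K` is a single vertex, or the target is attached to a single vertex only, the core consists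
  of all or all but one of the vertices in `A`, or is empty (`Inst.sparse`, `Inst.single`).
-/

open SimpleGraph

/-- A finite simple graph is 2-connected if it is connected, has at least 3 vertices,
and remains connected after deleting any single vertex. -/
def TwoConnected {V : Type*} [Fintype V] (G : SimpleGraph V) : Prop :=
  G.Connected ∧ 3 ≤ Fintype.card V ∧
    ∀ v : V, (G.induce ({v}ᶜ : Set V)).Connected

/-- The rooted graph `(G, x, y)` is 2-connected if `x ≠ y` and the graph obtained
from `G` by adding the edge `xy` (when absent) is 2-connected. -/
def RootedTwoConnected {V : Type*} [Fintype V] (G : SimpleGraph V) (x y : V) : Prop :=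
  x ≠ y ∧ TwoConnected (G ⊔ SimpleGraph.fromEdgeSet {s(x, y)})

/-- The sequence of lengths `f 1, …, f k` satisfies the length condition:
`f 1 ≥ 2` and consecutive lengths differ by exactly `2`. -/
def LengthSeq (k : ℕ) (f : ℕ → ℕ) : Prop :=
  2 ≤ f 1 ∧ ∀ i, 1 ≤ i → i ≤ k - 1 → f (i + 1) = f i + 2

/-- The sequence of lengths `f 1, …, f k` satisfies the semi-length condition:
`f 1 ≥ 2` and there is a switch `j` with `1 ≤ j ≤ k − 1` such that consecutive
lengths differ by `2` except at the switch, where they differ by `1`. -/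
def SemiLengthSeq (k : ℕ) (f : ℕ → ℕ) : Prop :=
  2 ≤ f 1 ∧ ∃ j, 1 ≤ j ∧ j ≤ k - 1 ∧
    (∀ i, 1 ≤ i → i ≤ j - 1 → f (i + 1) = f i + 2) ∧
    f (j + 1) = f j + 1 ∧
    (∀ i, j + 1 ≤ i → i ≤ k - 1 → f (i + 1) = f i + 2)

namespace KPaths

open scoped Classical in
/-- The `0`/`1` indicator of a proposition. -/
noncomputable def ind (p : Prop) : ℕ := if p then 1 else 0

lemma ind_true {p : Prop} (h : p) : ind p = 1 := by simp [ind, h]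
lemma ind_false {p : Prop} (h : ¬ p) : ind p = 0 := by simp [ind, h]
lemma ind_le (p : Prop) : ind p ≤ 1 := by unfold ind; split_ifs <;> simp
lemma ind_mono {p q : Prop} (h : p → q) : ind p ≤ ind q := by
  by_cases hp : p
  · rw [ind_true hp, ind_true (h hp)]
  · rw [ind_false hp]; omega
lemma of_ind_pos {p : Prop} (h : 0 < ind p) : p := by
  by_contra hp; rw [ind_false hp] at h; omega

/-! ### Arithmetic of sets of lengths -/

/-- `P d L`: the set of lengths `L` contains `d - 1` consecutive integers, or an arithmetic
progression with difference `2` and `⌈d / 2⌉` terms. -/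
def P (d : ℕ) (L : ℕ → Prop) : Prop :=
  ∃ l, (∀ i, i + 1 < d → L (l + i)) ∨ (∀ i, i < (d + 1) / 2 → L (l + 2 * i))

lemma P.mono {d : ℕ} {L L' : ℕ → Prop} (h : P d L) (hL : ∀ l, L l → L' l) : P d L' := by
  obtain ⟨l, h | h⟩ := h
  · exact ⟨l, Or.inl fun i hi => hL _ (h i hi)⟩
  · exact ⟨l, Or.inr fun i hi => hL _ (h i hi)⟩

lemma P.anti {d d' : ℕ} {L : ℕ → Prop} (h : P d' L) (hd : d ≤ d') : P d L := by
  obtain ⟨l, h | h⟩ := h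
  · exact ⟨l, Or.inl fun i hi => h i (by omega)⟩
  · exact ⟨l, Or.inr fun i hi => h i (by omega)⟩

lemma P.shift {d : ℕ} {L L' : ℕ → Prop} (h : P d L) (c : ℕ)
    (hL : ∀ l, L l → L' (l + c)) : P d L' := by
  obtain ⟨l, h | h⟩ := h
  · refine ⟨l + c, Or.inl fun i hi => ?_⟩
    have := hL _ (h i hi)
    rwa [Nat.add_right_comm] at this
  · refine ⟨l + c, Or.inr fun i hi => ?_⟩
    have := hL _ (h i hi)
    rwa [Nat.add_right_comm] at this

lemma P.of_two {d : ℕ} {L : ℕ → Prop} (l : ℕ) (hd : d ≤ 2) (h : L l) : P d L :=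
  ⟨l, Or.inl fun i hi => by obtain rfl : i = 0 := by omega
                            simpa using h⟩

lemma P.of_three {d : ℕ} {L : ℕ → Prop} (l : ℕ) (hd : d ≤ 3) (h : L l) (h' : L (l + 1)) :
    P d L :=
  ⟨l, Or.inl fun i hi => by
    obtain rfl | rfl : i = 0 ∨ i = 1 := by omega
    · simpa using h
    · exact h'⟩

lemma P.of_four {d : ℕ} {L : ℕ → Prop} (l : ℕ) (hd : d ≤ 4) (h : L l) (h' : L (l + 2)) :
    P d L :=
  ⟨l, Or.inr fun i hi => by
    obtain rfl | rfl : i = 0 ∨ i = 1 := by omega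
    · simpa using h
    · exact h'⟩

/-- `Gain g L`: adding the lengths of `L` to those of a set with `P d`, where `2 ≤ d`, yields a
set with `P (d + g)`, because `L` contains either `⌈g / 2⌉ + 1` terms in arithmetic progression with
difference `2`, or `g + 1` consecutive integers. -/
def Gain (g : ℕ) (L : ℕ → Prop) : Prop :=
  ∃ c, (∃ q, 1 ≤ q ∧ g ≤ 2 * (q - 1) ∧ ∀ j, j < q → L (c + 2 * j)) ∨
    (∀ j, j ≤ g → L (c + j))

/-- A loss of degree `g` is made up for by adding the lengths of a set with `Gain g`. Two
progressions sum to a progression; an interval and a progression sum to an interval, unless the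
interval is a single point; two intervals sum to an interval. -/
lemma P.gain {d d' g : ℕ} {L1 L2 L : ℕ → Prop} (c0 : ℕ) (hd' : 2 ≤ d') (h1 : P d' L1)
    (h2 : Gain g L2) (hd : d ≤ d' + g) (hL : ∀ l m, L1 l → L2 m → L (l + m + c0)) :
    P d L := by
  obtain ⟨c, ⟨q, hq, hg, h2⟩ | h2⟩ := h2
  · obtain ⟨l, h | h⟩ := h1
    · rcases Nat.lt_or_ge 2 d' with h3 | h3
      · refine ⟨l + c + c0, Or.inl fun i hi => ?_⟩
        -- `i = i₁ + 2 j` with `i₁ ≤ d' - 2` and `j ≤ q - 1`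
        by_cases hi2 : i / 2 < q
        · have := hL _ _ (h (i % 2) (by omega)) (h2 (i / 2) hi2)
          convert this using 1; omega
        · have := hL _ _ (h (i - 2 * (q - 1)) (by omega)) (h2 (q - 1) (by omega))
          convert this using 1; omega
      · refine ⟨l + c + c0, Or.inr fun i hi => ?_⟩
        have := hL _ _ (h 0 (by omega)) (h2 i (by omega))
        convert this using 1; omega
    · refine ⟨l + c + c0, Or.inr fun i hi => ?_⟩
      by_cases hi2 : i < q
      · have := hL _ _ (h 0 (by omega)) (h2 i hi2)
        convert this using 1; omega
      · have := hL _ _ (h (i - (q - 1)) (by omega)) (h2 (q - 1) (by omega))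
        convert this using 1; omega
  · obtain ⟨l, h | h⟩ := h1
    · refine ⟨l + c + c0, Or.inl fun i hi => ?_⟩
      by_cases hi2 : i ≤ g
      · have := hL _ _ (h 0 (by omega)) (h2 i hi2)
        convert this using 1; omega
      · have := hL _ _ (h (i - g) (by omega)) (h2 g le_rfl)
        convert this using 1; omega
    · rcases Nat.eq_zero_or_pos g with rfl | hg
      · refine ⟨l + c + c0, Or.inr fun i hi => ?_⟩
        have := hL _ _ (h i (by omega)) (h2 0 (by omega))
        convert this using 1; omega
      · refine ⟨l + c + c0, Or.inl fun i hi => ?_⟩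
        by_cases hi2 : i / 2 < (d' + 1) / 2
        · have := hL _ _ (h (i / 2) hi2) (h2 (i % 2) (by omega))
          convert this using 1; omega
        · have := hL _ _ (h ((d' + 1) / 2 - 1) (by omega))
            (h2 (i - 2 * ((d' + 1) / 2 - 1)) (by omega))
          convert this using 1; omega

/-- The lengths of two parts joined at a cut vertex; together the parts lose `3` in degree. -/
lemma P.comb {d : ℕ} {L1 L2 L : ℕ → Prop} (c0 : ℕ) (hd : 5 ≤ d) (h1 : P (d - 2) L1)
    (h2 : P (d - 1) L2) (hL : ∀ l m, L1 l → L2 m → L (l + m + c0)) : P d L := by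
  obtain ⟨l, h | h⟩ := h1
  · refine P.gain (d' := d - 1) (g := d - 4) c0 (by omega) h2
      ⟨l, Or.inr fun j hj => h j (by omega)⟩ (by omega) (fun a b ha hb => ?_)
    rw [Nat.add_comm a b]; exact hL _ _ hb ha
  · refine P.gain (d' := d - 1) (g := 2 * ((d - 1) / 2 - 1)) c0 (by omega) h2
      ⟨l, Or.inl ⟨(d - 1) / 2, by omega, by omega, fun j hj => h j (by omega)⟩⟩ (by omega)
      (fun a b ha hb => ?_)
    rw [Nat.add_comm a b]; exact hL _ _ hb ha

/-! ### Paths inside a vertex set -/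

section Paths

variable {V : Type*} {G : SimpleGraph V}

open scoped Classical in
/-- `PL G S x y n`: the graph `G` has a path from `x` to `y` with `n` edges, all of whose
vertices lie in `S`. -/
inductive PL (G : SimpleGraph V) : Finset V → V → V → ℕ → Prop
  | nil {S : Finset V} {x : V} (hx : x ∈ S) : PL G S x x 0
  | cons {S : Finset V} {x z y : V} {n : ℕ} (hx : x ∈ S) (h : G.Adj x z)
      (hp : PL G (S.erase x) z y n) : PL G S x y (n + 1)

open scoped Classical

lemma PL.mem_left {S : Finset V} {x y : V} {n : ℕ} (h : PL G S x y n) : x ∈ S := by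
  cases h <;> assumption

lemma PL.mem_right {S : Finset V} {x y : V} {n : ℕ} (h : PL G S x y n) : y ∈ S := by
  induction h with
  | nil hx => exact hx
  | cons hx h hp ih => exact Finset.mem_of_mem_erase ih

lemma PL.mono {S S' : Finset V} {x y : V} {n : ℕ} (h : PL G S x y n) (hS : S ⊆ S') :
    PL G S' x y n := by
  induction h generalizing S' with
  | nil hx => exact .nil (hS hx)
  | cons hx h hp ih => exact .cons (hS hx) h (ih (Finset.erase_subset_erase _ hS))

lemma PL.join {S S' : Finset V} {x y y' z : V} {n m : ℕ} (h : PL G S x y n)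
    (h' : PL G S' y' z m) (hd : Disjoint S S') (ha : G.Adj y y') :
    PL G (S ∪ S') x z (n + m + 1) := by
  induction h with
  | @nil S x hx =>
    rw [Nat.zero_add]
    refine .cons (Finset.mem_union_left _ hx) ha (h'.mono fun v hv => ?_)
    have : v ≠ x := fun h => Finset.disjoint_left.1 hd hx (h ▸ hv)
    simp [this, hv]
  | @cons S x w y n hx hxw hp ih =>
    have := ih (hd.mono_left (Finset.erase_subset _ _)) ha
    rw [show n + 1 + m + 1 = (n + m + 1) + 1 by omega]
    refine .cons (Finset.mem_union_left _ hx) hxw (this.mono fun v hv => ?_)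
    rcases Finset.mem_union.1 hv with hv | hv
    · simp at hv; simp [hv]
    · have : v ≠ x := fun h => Finset.disjoint_left.1 hd hx (h ▸ hv)
      simp [this, hv]

/-- Joining two paths in disjoint parts of a given set. -/
lemma PL.join' {U S S' : Finset V} {x y y' z : V} {n m : ℕ} (h : PL G S x y n)
    (h' : PL G S' y' z m) (hd : Disjoint S S') (ha : G.Adj y y') (hS : S ⊆ U) (hS' : S' ⊆ U) :
    PL G U x z (n + m + 1) :=
  (h.join h' hd ha).mono (Finset.union_subset hS hS')

lemma PL.snoc {S U : Finset V} {x y z : V} {n : ℕ} (h : PL G S x y n) (ha : G.Adj y z)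
    (hz : z ∉ S) (hS : S ⊆ U) (hzU : z ∈ U) : PL G U x z (n + 1) :=
  h.join' (.nil (Finset.mem_singleton_self z)) (by simpa using hz) ha hS (by simpa using hzU)

lemma PL.prep {S U : Finset V} {x y z : V} {n : ℕ} (h : PL G S x y n) (ha : G.Adj z x)
    (hz : z ∉ S) (hS : S ⊆ U) (hzU : z ∈ U) : PL G U z y (n + 1) :=
  .cons hzU ha (h.mono fun v hv => Finset.mem_erase.2 ⟨fun e => hz (e ▸ hv), hS hv⟩)

lemma PL.symm {S : Finset V} {x y : V} {n : ℕ} (h : PL G S x y n) : PL G S y x n := by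
  induction h with
  | nil hx => exact .nil hx
  | cons hx h hp ih =>
    exact ih.snoc h.symm (by simp) (Finset.erase_subset _ _) hx

lemma PL.extend {S : Finset V} {x y z : V} {n : ℕ} (h : PL G S x y n) (ha : G.Adj y z)
    (hz : z ∈ S) : ∃ m, PL G S x z m := by
  induction h with
  | @nil S x hx =>
    exact ⟨1, .cons hx ha (.nil (Finset.mem_erase.2 ⟨ha.ne', hz⟩))⟩
  | @cons S x w y n hx hxw hp ih =>
    by_cases hzx : z = x
    · subst hzx; exact ⟨0, .nil hx⟩
    · obtain ⟨m, hm⟩ := ih ha (Finset.mem_erase.2 ⟨hzx, hz⟩)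
      exact ⟨m + 1, .cons hx hxw hm⟩

lemma PL.closed {S D : Finset V} {x y : V} {n : ℕ} (h : PL G S x y n) (hx : x ∈ D)
    (hD : ∀ u ∈ D, ∀ v ∈ S, G.Adj u v → v ∈ D) : y ∈ D := by
  induction h with
  | nil => exact hx
  | cons hxS hxw hp ih =>
    exact ih (hD _ hx _ (Finset.mem_of_mem_erase hp.mem_left) hxw)
      (fun u hu v hv => hD u hu v (Finset.mem_of_mem_erase hv))

lemma PL.exists_walk {S : Finset V} {x y : V} {n : ℕ} (h : PL G S x y n) :
    ∃ p : G.Walk x y, p.IsPath ∧ (∀ v ∈ p.support, v ∈ S) ∧ p.length = n := by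
  induction h with
  | nil hx => exact ⟨.nil, by simp, by simpa using hx, rfl⟩
  | cons hx h hp ih =>
    obtain ⟨p, hp1, hp2, hp3⟩ := ih
    refine ⟨.cons h p, ?_, ?_, by simp [hp3]⟩
    · rw [Walk.cons_isPath_iff]
      exact ⟨hp1, fun hc => by simpa using hp2 _ hc⟩
    · intro v hv
      rw [Walk.support_cons, List.mem_cons] at hv
      rcases hv with rfl | hv
      · exact hx
      · exact Finset.mem_of_mem_erase (hp2 v hv)

/-! ### Neighbour counts, boundaries and connectivity -/

/-- The number of neighbours of `u` in `S`. -/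
noncomputable def dg (G : SimpleGraph V) (S : Finset V) (u : V) : ℕ :=
  (S.filter fun v => G.Adj u v).card

lemma dg_union {S T : Finset V} (h : Disjoint S T) (u : V) :
    dg G (S ∪ T) u = dg G S u + dg G T u := by
  unfold dg
  rw [Finset.filter_union, Finset.card_union_of_disjoint (Finset.disjoint_filter_filter h)]

lemma dg_singleton (c u : V) : dg G {c} u = ind (G.Adj u c) := by
  unfold dg ind
  rw [Finset.filter_singleton]; split_ifs <;> simp

lemma dg_mono {S T : Finset V} (h : S ⊆ T) (u : V) : dg G S u ≤ dg G T u :=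
  Finset.card_le_card (Finset.filter_subset_filter _ h)

lemma dg_le_card (S : Finset V) (u : V) : dg G S u ≤ S.card := Finset.card_filter_le _ _

lemma dg_pos {S : Finset V} {u : V} : 0 < dg G S u ↔ ∃ v ∈ S, G.Adj u v := by
  unfold dg
  rw [Finset.card_pos]
  exact ⟨fun ⟨v, hv⟩ => ⟨v, (Finset.mem_filter.1 hv).1, (Finset.mem_filter.1 hv).2⟩,
    fun ⟨v, hv, h⟩ => ⟨v, Finset.mem_filter.2 ⟨hv, h⟩⟩⟩

lemma dg_eq_zero {S : Finset V} {u : V} (h : ∀ v ∈ S, ¬ G.Adj u v) : dg G S u = 0 := by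
  by_contra hc
  obtain ⟨v, hv, ha⟩ := dg_pos.1 (Nat.pos_of_ne_zero hc)
  exact h v hv ha

lemma dg_full {S : Finset V} {u : V} (h : S.card ≤ dg G S u) : ∀ v ∈ S, G.Adj u v := by
  intro v hv
  have : S.filter (fun v => G.Adj u v) = S :=
    Finset.eq_of_subset_of_card_le (Finset.filter_subset _ _) h
  rw [← this] at hv
  exact (Finset.mem_filter.1 hv).2

lemma dg_split {S T U : Finset V} (h : Disjoint S T) (hU : U ⊆ S ∪ T) (u : V) :
    dg G U u ≤ dg G S u + dg G T u := by
  rw [← dg_union h]; exact dg_mono hU u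

/-- For `U` larger than `U'` only by vertices not adjacent to `u` and by `c`. -/
lemma dg_le_ind {U U' : Finset V} {u c : V}
    (h : ∀ v ∈ U, G.Adj u v → v ∈ U' ∨ v = c) : dg G U u ≤ dg G U' u + ind (G.Adj u c) := by
  rw [← dg_singleton]
  unfold dg
  refine le_trans (Finset.card_le_card ?_) (Finset.card_union_le _ _)
  intro v hv
  rw [Finset.mem_filter] at hv
  rcases h v hv.1 hv.2 with h1 | rfl
  · exact Finset.mem_union_left _ (Finset.mem_filter.2 ⟨h1, hv.2⟩)
  · exact Finset.mem_union_right _ (Finset.mem_filter.2 ⟨by simp, hv.2⟩)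

lemma dg_le_of {U U' : Finset V} {u : V}
    (h : ∀ v ∈ U, G.Adj u v → v ∈ U') : dg G U u ≤ dg G U' u := by
  refine Finset.card_le_card ?_
  intro v hv
  rw [Finset.mem_filter] at hv ⊢
  exact ⟨h v hv.1 hv.2, hv.2⟩

/-- The set of vertices of `U` outside `D` that have a neighbour in `D`. -/
noncomputable def bd (G : SimpleGraph V) (U D : Finset V) : Finset V :=
  U.filter fun v => v ∉ D ∧ ∃ u ∈ D, G.Adj u v

lemma mem_bd {U D : Finset V} {v : V} :
    v ∈ bd G U D ↔ v ∈ U ∧ v ∉ D ∧ ∃ u ∈ D, G.Adj u v := by simp [bd]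

lemma bd_le_ind {U U' D : Finset V} {c : V}
    (h : ∀ v ∈ U, v ∉ D → (∃ u ∈ D, G.Adj u v) → v ∈ U' ∨ v = c) :
    (bd G U D).card ≤ (bd G U' D).card + ind (∃ u ∈ D, G.Adj u c) := by
  by_cases hc : ∃ u ∈ D, G.Adj u c
  · rw [ind_true hc]
    refine le_trans (Finset.card_le_card (t := insert c (bd G U' D)) ?_)
      (Finset.card_insert_le _ _)
    intro v hv
    rw [mem_bd] at hv
    rcases h v hv.1 hv.2.1 hv.2.2 with h1 | rfl
    · exact Finset.mem_insert_of_mem (mem_bd.2 ⟨h1, hv.2⟩)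
    · simp
  · rw [ind_false hc]
    refine Finset.card_le_card ?_
    intro v hv
    rw [mem_bd] at hv
    rcases h v hv.1 hv.2.1 hv.2.2 with h1 | rfl
    · exact mem_bd.2 ⟨h1, hv.2⟩
    · exact absurd hv.2.2 hc

lemma bd_le {U U' D : Finset V}
    (h : ∀ v ∈ U, v ∉ D → (∃ u ∈ D, G.Adj u v) → v ∈ U') :
    (bd G U D).card ≤ (bd G U' D).card := by
  refine Finset.card_le_card ?_
  intro v hv
  rw [mem_bd] at hv
  exact mem_bd.2 ⟨h v hv.1 hv.2.1 hv.2.2, hv.2⟩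

lemma bd_mono {U U' D : Finset V} (h : U ⊆ U') : (bd G U D).card ≤ (bd G U' D).card :=
  bd_le fun v hv _ _ => h hv

/-- `Q` induces a connected subgraph (or is empty): no proper nonempty part of it is closed. -/
def Cn (G : SimpleGraph V) (Q : Finset V) : Prop :=
  ∀ D ⊆ Q, D.Nonempty → D ≠ Q → (bd G Q D).Nonempty

/-- The vertices that can be reached from `z` inside `X`. -/
noncomputable def comp (G : SimpleGraph V) (X : Finset V) (z : V) : Finset V :=
  X.filter fun v => ∃ n, PL G X z v n

lemma mem_comp {X : Finset V} {z v : V} : v ∈ comp G X z ↔ ∃ n, PL G X z v n := by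
  simp only [comp, Finset.mem_filter, and_iff_right_iff_imp]
  rintro ⟨n, h⟩; exact h.mem_right

lemma comp_subset (X : Finset V) (z : V) : comp G X z ⊆ X := Finset.filter_subset _ _

lemma self_mem_comp {X : Finset V} {z : V} (hz : z ∈ X) : z ∈ comp G X z :=
  mem_comp.2 ⟨0, .nil hz⟩

lemma comp_closed {X : Finset V} {z u v : V} (hu : u ∈ comp G X z) (hv : v ∈ X)
    (h : G.Adj u v) : v ∈ comp G X z := by
  obtain ⟨n, hn⟩ := mem_comp.1 hu
  exact mem_comp.2 (hn.extend h hv)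

lemma comp_cn (X : Finset V) (z : V) : Cn G (comp G X z) := by
  intro D hD ⟨d, hd⟩ hne
  by_contra hb
  rw [Finset.not_nonempty_iff_eq_empty] at hb
  have hcl : ∀ u ∈ D, ∀ v ∈ X, G.Adj u v → v ∈ D := by
    intro u hu v hv ha
    by_contra hvD
    have : v ∈ bd G (comp G X z) D := mem_bd.2 ⟨comp_closed (hD hu) hv ha, hvD, u, hu, ha⟩
    rw [hb] at this; simp at this
  obtain ⟨n, hn⟩ := mem_comp.1 (hD hd)
  have hz : z ∈ D := hn.symm.closed hd hcl
  refine hne (Finset.Subset.antisymm hD fun v hv => ?_)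
  obtain ⟨m, hm⟩ := mem_comp.1 hv
  exact hm.closed hz hcl

lemma Cn.path {Q : Finset V} (h : Cn G Q) {u v : V} (hu : u ∈ Q) (hv : v ∈ Q) :
    ∃ n, PL G Q u v n := by
  have : comp G Q u = Q := by
    by_contra hne
    obtain ⟨w, hw⟩ := h _ (comp_subset Q u) ⟨u, self_mem_comp hu⟩ hne
    obtain ⟨h1, h2, t, ht, ha⟩ := mem_bd.1 hw
    exact h2 (comp_closed ht h1 ha)
  rw [← this] at hv
  exact mem_comp.1 hv

end Paths

end KPaths

namespace KPaths

/-! ### Weighted instances -/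

section Instances

variable {V : Type*} {G : SimpleGraph V}

/-- The lengths of the paths of an instance `(U, A, B)`: a path inside `U` from a vertex of `A`
(the neighbours of the source) to a vertex `y`, followed by one of the offsets in `B y` (the
possible lengths of the last step from `y` to the target, normalised). -/
def Len (G : SimpleGraph V) (U : Finset V) (A : Set V) (B : V → Finset ℕ) (l : ℕ) : Prop :=
  ∃ x ∈ A, ∃ y n, ∃ o ∈ B y, PL G U x y n ∧ l = n + o

/-- Rooted 2-connectivity of an instance: every nonempty `D ⊆ U` is attached to at least two
things among the vertices of `U \ D`, the source and the target. -/
def Conn (G : SimpleGraph V) (U : Finset V) (A : Set V) (B : V → Finset ℕ) : Prop :=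
  ∀ D ⊆ U, D.Nonempty →
    2 ≤ (bd G U D).card + ind (∃ u ∈ D, u ∈ A) + ind (∃ u ∈ D, (B u).Nonempty)

/-- All offsets are `0` or `2`. -/
def Offs (B : V → Finset ℕ) : Prop := ∀ u, B u ⊆ {0, 2}

/-- The main induction statement for the vertex set `U`. -/
def W (G : SimpleGraph V) (U : Finset V) : Prop :=
  ∀ (A : Set V) (B : V → Finset ℕ) (d : ℕ), Offs B → U.Nonempty → Conn G U A B → 2 ≤ d →
    (∀ u ∈ U, d ≤ dg G U u + ind (u ∈ A) + (B u).card) → P d (Len G U A B)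

open scoped Classical

lemma Offs.card_le {B : V → Finset ℕ} (h : Offs B) (u : V) : (B u).card ≤ 2 :=
  (Finset.card_le_card (h u)).trans (by simp)

lemma Offs.eq {B : V → Finset ℕ} (h : Offs B) {u : V} {o : ℕ} (ho : o ∈ B u) :
    o = 0 ∨ o = 2 := by simpa using h u ho

lemma Offs.two {B : V → Finset ℕ} (h : Offs B) {u : V} (hc : 2 ≤ (B u).card) :
    0 ∈ B u ∧ 2 ∈ B u := by
  have : B u = {0, 2} := Finset.eq_of_subset_of_card_le (h u) (by simpa using hc)
  simp [this]

lemma Conn.two_le {U : Finset V} {A : Set V} {B : V → Finset ℕ} (h : Conn G U A B) {u : V}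
    (hu : u ∈ U) : 2 ≤ dg G U u + ind (u ∈ A) + (B u).card := by
  have h1 := h {u} (by simpa using hu) (by simp)
  have h2 : (bd G U {u}).card ≤ dg G U u := by
    refine Finset.card_le_card fun v hv => ?_
    rw [mem_bd] at hv
    obtain ⟨hv, -, w, hw, ha⟩ := hv
    rw [Finset.mem_singleton] at hw
    exact Finset.mem_filter.2 ⟨hv, hw ▸ ha⟩
  have h3 : ind (∃ v ∈ ({u} : Finset V), (B v).Nonempty) ≤ (B u).card := by
    by_cases hb : (B u).Nonempty
    · exact (ind_le _).trans hb.card_pos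
    · rw [ind_false (by simpa using hb)]; omega
  have h4 : ind (∃ v ∈ ({u} : Finset V), v ∈ A) ≤ ind (u ∈ A) := ind_mono (by simp)
  omega

/-- The induction statement with a degree deficit; the bound `2` is automatic from `Conn`. -/
lemma W.apply {U : Finset V} (h : W G U) {A : Set V} {B : V → Finset ℕ} {d : ℕ} (loss : ℕ)
    (hB : Offs B) (hU : U.Nonempty) (hC : Conn G U A B)
    (hdeg : ∀ u ∈ U, d ≤ dg G U u + ind (u ∈ A) + (B u).card + loss) :
    P (max 2 (d - loss)) (Len G U A B) :=
  h A B _ hB hU hC (le_max_left _ _) fun u hu => by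
    have := hC.two_le hu; have := hdeg u hu; omega

/-- The vertices with a neighbour in `S`, used as the set of neighbours of a source. -/
def nS (G : SimpleGraph V) (S : Finset V) : Set V := {u | ∃ v ∈ S, G.Adj u v}

/-- The vertex `c` as an unweighted target. -/
noncomputable def nT (G : SimpleGraph V) (c : V) : V → Finset ℕ :=
  fun u => if G.Adj u c then {0} else ∅

lemma mem_nS {S : Finset V} {u : V} : u ∈ nS G S ↔ ∃ v ∈ S, G.Adj u v := Iff.rfl

lemma nT_nonempty {c u : V} : (nT G c u).Nonempty ↔ G.Adj u c := by
  unfold nT; split_ifs with h <;> simp [h]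

lemma mem_nT {c u : V} {o : ℕ} : o ∈ nT G c u ↔ o = 0 ∧ G.Adj u c := by
  unfold nT; split_ifs with h <;> simp [h]

lemma nT_card (c u : V) : (nT G c u).card = ind (G.Adj u c) := by
  unfold nT ind; split_ifs with h <;> simp

lemma nT_offs (c : V) : Offs (nT G c) := by
  intro u o ho
  rw [mem_nT] at ho; simp [ho.1]

/-- A part `D` for which all proper subsets are well attached is a legal instance as soon as
both the source and the target are attached to it. -/
lemma conn_of_proper {D : Finset V} {A : Set V} {B : V → Finset ℕ}
    (hpr : ∀ D' ⊆ D, D'.Nonempty → D' ≠ D →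
      2 ≤ (bd G D D').card + ind (∃ u ∈ D', (B u).Nonempty))
    (hA : ∃ u ∈ D, u ∈ A) (hB : ∃ u ∈ D, (B u).Nonempty) : Conn G D A B := by
  intro D' hD' hne
  by_cases h : D' = D
  · subst h; rw [ind_true hA, ind_true hB]; omega
  · have := hpr D' hD' hne h; omega

/-! ### Routing through a piece next to the core -/

/-- Solving `(D, A', B')` by induction and extending all its paths by the same amount. -/
lemma piece_noS {U X D : Finset V} {A : Set V} {B B' : V → Finset ℕ} {d : ℕ}
    (hXU : X ⊆ U) (hDne : D.Nonempty) (hB' : Offs B')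
    (hpr : ∀ D' ⊆ D, D'.Nonempty → D' ≠ D →
      2 ≤ (bd G D D').card + ind (∃ u ∈ D', (B' u).Nonempty))
    (hBt : ∃ u ∈ D, (B' u).Nonempty) {c0 : ℕ}
    (hext : ∀ x y n o, PL G D x y n → o ∈ B' y →
      ∃ z m, ∃ o' ∈ B z, PL G X x z m ∧ m + o' = n + o + c0)
    (hW : W G D) (hA : ∃ u ∈ D, u ∈ A) (hd : 2 ≤ d)
    (hdeg : ∀ u ∈ D, d ≤ dg G D u + ind (u ∈ A) + (B' u).card) :
    P d (Len G U A B) := by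
  refine (hW A B' d hB' hDne (conn_of_proper hpr hA hBt) hd hdeg).shift c0 ?_
  rintro l ⟨x, hx, y, n, o, ho, hp, rfl⟩
  obtain ⟨z, m, o', ho', hp', he⟩ := hext x y n o hp ho
  exact ⟨x, hx, z, m, o', ho', hp'.mono hXU, he.symm⟩

/-- Entering the piece `D` from the side `S` of the core `K`, with the gain of the core paths
compensating the loss of degree. -/
lemma piece_S {K X D S : Finset V} {A : Set V} {B B' : V → Finset ℕ} {d loss : ℕ}
    (hKX : Disjoint K X) (hDne : D.Nonempty) (hB' : Offs B')
    (hpr : ∀ D' ⊆ D, D'.Nonempty → D' ≠ D →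
      2 ≤ (bd G D D').card + ind (∃ u ∈ D', (B' u).Nonempty))
    (hBt : ∃ u ∈ D, (B' u).Nonempty) {c0 : ℕ}
    (hext : ∀ x y n o, PL G D x y n → o ∈ B' y →
      ∃ z m, ∃ o' ∈ B z, PL G X x z m ∧ m + o' = n + o + c0)
    (hW : W G D) (hS : ∃ u ∈ D, ∃ v ∈ S, G.Adj u v)
    (hdeg : ∀ u ∈ D, d ≤ dg G D u + ind (∃ v ∈ S, G.Adj u v) + (B' u).card + loss)
    (hG : Gain loss fun l => ∀ s ∈ S, ∃ a ∈ A, PL G K a s l) :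
    P d (Len G (K ∪ X) A B) := by
  have h1 := hW.apply (A := nS G S) (d := d) loss hB' hDne
    (conn_of_proper hpr hS hBt) hdeg
  refine P.gain (c0 + 1) (le_max_left _ _) h1 hG (by omega) ?_
  rintro l m ⟨x, ⟨s, hs, hxs⟩, y, n, o, ho, hp, rfl⟩ hm
  obtain ⟨a, ha, hq⟩ := hm s hs
  obtain ⟨z, m', o', ho', hp', he⟩ := hext x y n o hp ho
  exact ⟨a, ha, z, _, o', ho', hq.join' hp' hKX hxs.symm Finset.subset_union_left
    Finset.subset_union_right, by omega⟩

/-- The piece `D` next to a core `K` whose side `S = {s}` is a single vertex, so that there is no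
room for a loss of degree. The roles of the source and of the unweighted target are exchanged,
and the two ways to leave `D` towards the source, directly or through `s` and `t`, become the
offsets `0` and `2`. -/
lemma piece_three {K X D : Finset V} {s t : V} {A : Set V} {B B' : V → Finset ℕ} {d : ℕ}
    (hKX : Disjoint K X) (hDne : D.Nonempty)
    (hpr : ∀ D' ⊆ D, D'.Nonempty → D' ≠ D →
      2 ≤ (bd G D D').card + ind (∃ u ∈ D', (B' u).Nonempty))
    (hBt : ∃ u ∈ D, (B' u).Nonempty) {c0 : ℕ}
    (hext : ∀ x y n o, PL G D x y n → o ∈ B' y →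
      ∃ z m, ∃ o' ∈ B z, PL G X x z m ∧ m + o' = n + o + c0)
    (hW : W G D) (hs : s ∈ K) (ht : t ∈ K) (htA : t ∈ A) (hts : G.Adj t s) (hd : 2 ≤ d)
    (hS : ∃ u ∈ D, G.Adj u s)
    (hdeg : ∀ u ∈ D, d ≤ dg G D u + ind (G.Adj u s) + ind (u ∈ A) + (B' u).card)
    (hc : ∃ c, ∀ u, B' u = nT G c u) :
    P d (Len G (K ∪ X) A B) := by
  have hpath : PL G K t s 1 := .cons ht hts (.nil (Finset.mem_erase.2 ⟨hts.ne', hs⟩))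
  obtain ⟨c, hc⟩ := hc
  let A' : Set V := {u | G.Adj u c}
  let B3 : V → Finset ℕ := fun u => (if u ∈ A then {0} else ∅) ∪ (if G.Adj u s then {2} else ∅)
  have hB3 : Offs B3 := by
    intro u o ho
    simp only [B3, Finset.mem_union] at ho
    rcases ho with ho | ho <;> split_ifs at ho <;> simp at ho <;> simp [ho]
  have hB3c : ∀ u, (B3 u).card = ind (u ∈ A) + ind (G.Adj u s) := by
    intro u; simp only [B3, ind]; split_ifs <;> simp
  have hC : Conn G D A' B3 := by
    intro D' hD' hne
    by_cases h : D' = D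
    · subst h
      rw [ind_true, ind_true]
      · omega
      · obtain ⟨u, hu, h⟩ := hS
        exact ⟨u, hu, 2, by simp [B3, h]⟩
      · obtain ⟨u, hu, h⟩ := hBt
        rw [hc, nT_nonempty] at h
        exact ⟨u, hu, h⟩
    · have := hpr D' hD' hne h
      have h2 : ind (∃ u ∈ D', (B' u).Nonempty) ≤ ind (∃ u ∈ D', u ∈ A') := by
        refine ind_mono ?_
        rintro ⟨u, hu, h⟩
        rw [hc, nT_nonempty] at h
        exact ⟨u, hu, h⟩
      omega
  refine (hW A' B3 d hB3 hDne hC hd fun u hu => ?_).shift c0 ?_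
  · have := hdeg u hu
    rw [hB3c]
    rw [hc, nT_card] at this
    have h3 : ind (G.Adj u c) = ind (u ∈ A') := rfl
    omega
  · rintro l ⟨x, hx, y, n, o, ho, hp, rfl⟩
    have h0 : (0 : ℕ) ∈ B' x := by rw [hc]; exact mem_nT.2 ⟨rfl, hx⟩
    obtain ⟨z, m', o', ho', hp', he⟩ := hext y x n 0 hp.symm h0
    simp only [B3, Finset.mem_union] at ho
    rcases ho with ho | ho
    · split_ifs at ho with h
      · obtain rfl : o = 0 := by simpa using ho
        exact ⟨y, h, z, m', o', ho', hp'.mono Finset.subset_union_right, by omega⟩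
      · simp at ho
    · split_ifs at ho with h
      · obtain rfl : o = 2 := by simpa using ho
        exact ⟨t, htA, z, _, o', ho', hpath.join' hp' hKX h.symm Finset.subset_union_left
          Finset.subset_union_right, by omega⟩
      · simp at ho

/-- The exceptional piece for a core `{s} ∪ T` whose side `{s}` is a single vertex: a
component `Q` of the graph outside the core attached to `s` but not to `T`, where no component
that reaches the target is attached to `T`. -/
structure Exc (G : SimpleGraph V) (X T : Finset V) (s : V) (B : V → Finset ℕ) (Q : Finset V) :
    Prop where
  sub : Q ⊆ X
  closed : bd G X Q = ∅
  cn : Cn G Q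
  noT : ∀ u ∈ Q, ∀ v ∈ T, ¬ G.Adj u v
  adjS : ∃ u ∈ Q, G.Adj u s
  adjB : ∃ u ∈ Q, (B u).Nonempty
  proper : ∀ D ⊆ Q, D.Nonempty → D ≠ Q →
      2 ≤ (bd G Q D).card + ind (∃ u ∈ D, (B u).Nonempty)
  far : ∀ z ∈ X, (B z).Nonempty → ∀ u ∈ comp G X z, ∀ v ∈ T, ¬ G.Adj u v

/-- The core lemma. The set `K = S ∪ T` carries many paths from the source to each vertex of
`T` and of `S`, and the other vertices have few neighbours in `K`; so induction on a piece of
the graph outside `K` loses no more than the paths in `K` gain. -/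
lemma core_lemma {K X S T : Finset V} {A : Set V} {B : V → Finset ℕ} {d lossT : ℕ}
    (hKX : Disjoint K X) (hK : K = S ∪ T) (hTA : ∀ t ∈ T, t ∈ A) (hB : Offs B)
    (hBX : ∃ u ∈ X, (B u).Nonempty) (hd : 2 ≤ d)
    (hI : ∀ D ⊆ X, D.Nonempty → 2 ≤ (bd G (K ∪ X) D).card + ind (∃ u ∈ D, u ∈ A) +
      ind (∃ u ∈ D, (B u).Nonempty))
    (hdeg : ∀ u ∈ X, d ≤ dg G (K ∪ X) u + ind (u ∈ A) + (B u).card)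
    (hW : ∀ D ⊆ X, W G D)
    (hLT : ∀ u ∈ X, dg G K u + ind (u ∈ A) ≤ lossT + ind (∃ v ∈ T, G.Adj u v))
    (hGT : Gain lossT fun l => ∀ v ∈ T, ∃ a ∈ A, PL G K a v l)
    (hmode : (∃ lossS, (∀ u ∈ X, (∀ v ∈ T, ¬ G.Adj u v) →
        dg G S u + ind (u ∈ A) ≤ lossS + ind (∃ v ∈ S, G.Adj u v)) ∧
        Gain lossS fun l => ∀ v ∈ S, ∃ a ∈ A, PL G K a v l) ∨
      (∃ s t, S = {s} ∧ t ∈ T ∧ G.Adj t s ∧ ((∃ c, ∀ u, B u = nT G c u) ∨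
        ∀ Q, Exc G X T s B Q → P d (Len G (K ∪ X) A B)))) :
    P d (Len G (K ∪ X) A B) := by
  -- Choose a component touching the target, and touching `T` as well if possible.
  obtain ⟨z, hz, hBz, hpref⟩ : ∃ z ∈ X, (B z).Nonempty ∧
      ((∃ u ∈ comp G X z, ∃ v ∈ T, G.Adj u v) ∨
        ∀ z ∈ X, (B z).Nonempty → ∀ u ∈ comp G X z, ∀ v ∈ T, ¬ G.Adj u v) := by
    by_cases h : ∃ z ∈ X, (B z).Nonempty ∧ ∃ u ∈ comp G X z, ∃ v ∈ T, G.Adj u v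
    · obtain ⟨z, hz, hBz, h⟩ := h
      exact ⟨z, hz, hBz, Or.inl h⟩
    · obtain ⟨z, hz, hBz⟩ := hBX
      push Not at h
      exact ⟨z, hz, hBz, Or.inr h⟩
  set Q := comp G X z with hQdef
  have hQX : Q ⊆ X := comp_subset X z
  have hzQ : z ∈ Q := self_mem_comp hz
  have hcn : Cn G Q := comp_cn X z
  have hcl : ∀ u ∈ Q, ∀ v ∈ X, G.Adj u v → v ∈ Q := fun u hu v hv ha => comp_closed hu hv ha
  have hQB : ∃ u ∈ Q, (B u).Nonempty := ⟨z, hzQ, hBz⟩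
  have hdegX : ∀ u ∈ X, dg G (K ∪ X) u = dg G K u + dg G X u := fun u _ => dg_union hKX u
  have hKS : ∀ u, (∀ v ∈ T, ¬ G.Adj u v) → dg G K u ≤ dg G S u := by
    intro u hu
    refine dg_le_of fun v hv ha => ?_
    rw [hK, Finset.mem_union] at hv
    exact hv.resolve_right fun h => hu v h ha
  -- Conclusion for a piece `D ⊆ Q` not attached to `T`.
  have hfin : ∀ (D : Finset V) (B' : V → Finset ℕ), D ⊆ X → D.Nonempty → Offs B' →
      (∀ u ∈ D, ∀ v ∈ T, ¬ G.Adj u v) →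
      (∀ D' ⊆ D, D'.Nonempty → D' ≠ D →
        2 ≤ (bd G D D').card + ind (∃ u ∈ D', (B' u).Nonempty)) →
      (∃ u ∈ D, (B' u).Nonempty) →
      (∃ c0, ∀ x y n o, PL G D x y n → o ∈ B' y →
        ∃ z m, ∃ o' ∈ B z, PL G X x z m ∧ m + o' = n + o + c0) →
      (∀ u ∈ D, dg G X u + (B u).card ≤ dg G D u + (B' u).card) →
      ((∀ u ∈ D, ∀ v ∈ S, ¬ G.Adj u v) → ∃ u ∈ D, u ∈ A) →
      ((∃ c, ∀ u, B' u = nT G c u) ∨ ∀ s, S = {s} → (∃ u ∈ D, G.Adj u s) →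
        (∃ t ∈ T, G.Adj t s) → (∀ Q, Exc G X T s B Q → P d (Len G (K ∪ X) A B)) →
        P d (Len G (K ∪ X) A B)) →
      (¬ (∃ c, ∀ u, B' u = nT G c u) → ¬ ∃ c, ∀ u, B u = nT G c u) →
      P d (Len G (K ∪ X) A B) := by
    intro D B' hDX hDne hB' hnoT hpr hBt ⟨c0, hext⟩ hloc hAD hc hc2
    have hdegD : ∀ u ∈ D, d ≤ dg G D u + dg G S u + ind (u ∈ A) + (B' u).card := by
      intro u hu
      have := hdeg u (hDX hu)
      rw [hdegX u (hDX hu)] at this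
      have := hloc u hu
      have := hKS u (hnoT u hu)
      omega
    by_cases hDS : ∃ u ∈ D, ∃ v ∈ S, G.Adj u v
    · rcases hmode with ⟨lossS, hLS, hGS⟩ | ⟨s, t, rfl, ht, hts, hexc⟩
      · refine piece_S (loss := lossS) hKX hDne hB' hpr hBt hext (hW D hDX) hDS (fun u hu => ?_)
          hGS
        have := hdegD u hu
        have := hLS u (hDX hu) (hnoT u hu)
        omega
      · have hDS' : ∃ u ∈ D, G.Adj u s := by simpa using hDS
        by_cases hun : ∃ c, ∀ u, B' u = nT G c u
        · exact piece_three (s := s) (t := t) hKX hDne hpr hBt hext (hW D hDX)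
            (by simp [hK]) (by simp [hK, ht]) (hTA t ht) hts hd hDS'
            (fun u hu => by have := hdegD u hu; rwa [dg_singleton] at this) hun
        · exact (hc.resolve_left hun) s rfl hDS' ⟨t, ht, hts⟩ (hexc.resolve_left (hc2 hun))
    · push Not at hDS
      refine piece_noS Finset.subset_union_right hDne hB' hpr hBt hext (hW D hDX) (hAD hDS) hd
        fun u hu => ?_
      have := hdegD u hu
      rw [dg_eq_zero (hDS u hu)] at this
      exact this
  by_cases h1 : ∃ D ⊆ Q, D.Nonempty ∧ D ≠ Q ∧ (∀ u ∈ D, ∀ v ∈ T, ¬ G.Adj u v) ∧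
      (∀ u ∈ D, ¬ (B u).Nonempty) ∧ (bd G Q D).card = 1
  · -- A minimal end piece, separated from the rest of `Q` by a single vertex `c`.
    obtain ⟨D, ⟨hDQ, hDne, hDneQ, hnoT, hnoB, hcard⟩, hmin⟩ := WellFounded.has_min
      (r := fun a b : Finset V => a < b) wellFounded_lt
      {D | D ⊆ Q ∧ D.Nonempty ∧ D ≠ Q ∧ (∀ u ∈ D, ∀ v ∈ T, ¬ G.Adj u v) ∧
      (∀ u ∈ D, ¬ (B u).Nonempty) ∧ (bd G Q D).card = 1} h1
    obtain ⟨c, hcE⟩ := Finset.card_eq_one.1 hcard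
    have hcmem : c ∈ bd G Q D := by simp [hcE]
    obtain ⟨hcQ, hcD, u0, hu0, ha0⟩ := mem_bd.1 hcmem
    have hout : ∀ v ∈ Q, v ∉ D → (∃ u ∈ D, G.Adj u v) → v = c := by
      intro v hv hvD hu
      have : v ∈ bd G Q D := mem_bd.2 ⟨hv, hvD, hu⟩
      rwa [hcE, Finset.mem_singleton] at this
    -- a path from `c` to the target avoiding `D`
    obtain ⟨z', n', o', ho', hp'⟩ : ∃ z' n', ∃ o' ∈ B z', PL G (Q \ D) c z' n' := by
      set R := comp G (Q \ D) c with hR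
      have hRQ : R ⊆ Q := (comp_subset _ _).trans Finset.sdiff_subset
      have hcR : c ∈ R := self_mem_comp (by simp [hcQ, hcD])
      have hall : R ∪ D = Q := by
        by_contra hne
        obtain ⟨v, hv⟩ := hcn (R ∪ D) (Finset.union_subset hRQ hDQ)
          (hDne.mono Finset.subset_union_right) hne
        obtain ⟨hvQ, hvn, u, hu, ha⟩ := mem_bd.1 hv
        rw [Finset.mem_union, not_or] at hvn
        rcases Finset.mem_union.1 hu with hu | hu
        · exact hvn.1 (comp_closed hu (by simp [hvQ, hvn.2]) ha)
        · rw [hout v hvQ hvn.2 ⟨u, hu, ha⟩] at hvn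
          exact hvn.1 hcR
      obtain ⟨w, hw, o', ho'⟩ := hQB
      rw [← hall, Finset.mem_union] at hw
      rcases hw with hw | hw
      · obtain ⟨n, hn⟩ := mem_comp.1 hw
        exact ⟨w, n, o', ho', hn⟩
      · exact absurd ⟨o', ho'⟩ (hnoB w hw)
    refine hfin D (nT G c) (hDQ.trans hQX) hDne (nT_offs c) hnoT ?_ ?_ ?_ ?_ ?_ ?_ ?_
    · intro D' hD' hne hneD
      have hD'Q : D' ≠ Q := fun h => hDneQ (Finset.Subset.antisymm hDQ (h ▸ hD'))
      have h2 : (bd G Q D').card ≠ 1 := by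
        intro h
        exact hmin D' ⟨hD'.trans hDQ, hne, hD'Q, fun u hu => hnoT u (hD' hu),
          fun u hu => hnoB u (hD' hu), h⟩ (Finset.ssubset_iff_subset_ne.2 ⟨hD', hneD⟩)
      have h3 := (hcn D' (hD'.trans hDQ) hne hD'Q).card_pos
      have h4 := bd_le_ind (G := G) (U := Q) (U' := D) (D := D') (c := c)
        (fun v hv hvD' ⟨u, hu, ha⟩ => by
          by_cases hvD : v ∈ D
          · exact Or.inl hvD
          · exact Or.inr (hout v hv hvD ⟨u, hD' hu, ha⟩))
      simp only [nT_nonempty]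
      omega
    · exact ⟨u0, hu0, nT_nonempty.2 ha0⟩
    · refine ⟨n' + o' + 1, fun x y n o hp ho => ?_⟩
      rw [mem_nT] at ho
      refine ⟨z', _, o', ho', hp.join' hp' Finset.disjoint_sdiff ho.2 (hDQ.trans hQX)
        (Finset.sdiff_subset.trans hQX), ?_⟩
      omega
    · intro u hu
      have h5 : (B u).card = 0 := by
        rw [Finset.card_eq_zero]; exact Finset.not_nonempty_iff_eq_empty.1 (hnoB u hu)
      rw [nT_card, h5]
      refine dg_le_ind fun v hv ha => ?_
      by_cases hvD : v ∈ D
      · exact Or.inl hvD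
      · exact Or.inr (hout v (hcl u (hDQ hu) v hv ha) hvD ⟨u, hu, ha⟩)
    · intro hnoS
      have h6 := hI D (hDQ.trans hQX) hDne
      rw [ind_false (p := ∃ u ∈ D, (B u).Nonempty) (fun ⟨u, hu, h⟩ => hnoB u hu h)] at h6
      have h7 : (bd G (K ∪ X) D).card ≤ (bd G Q D).card := by
        refine bd_le fun v hv _ ⟨u, hu, ha⟩ => ?_
        rcases Finset.mem_union.1 hv with hv | hv
        · rw [hK, Finset.mem_union] at hv
          exact absurd ha (hv.elim (fun h => hnoS u hu v h) (fun h => hnoT u hu v h))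
        · exact hcl u (hDQ hu) v hv ha
      exact of_ind_pos (by omega)
    · exact Or.inl ⟨c, fun _ => rfl⟩
    · exact fun h => absurd ⟨c, fun _ => rfl⟩ h
  · push Not at h1
    by_cases hQT : ∃ u ∈ Q, ∃ v ∈ T, G.Adj u v
    · -- `Q` is entered from `T`.
      have hC : Conn G Q (nS G T) B := by
        intro D hD hne
        by_cases hDQ : D = Q
        · rw [hDQ, ind_true (p := ∃ u ∈ Q, u ∈ nS G T) hQT, ind_true hQB]; omega
        have h3 := (hcn D hD hne hDQ).card_pos
        by_cases hDT : ∃ u ∈ D, u ∈ nS G T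
        · rw [ind_true hDT]; omega
        by_cases hDB : ∃ u ∈ D, (B u).Nonempty
        · rw [ind_true hDB]; omega
        have := h1 D hD hne hDQ (fun u hu v hv ha => hDT ⟨u, hu, v, hv, ha⟩)
          (fun u hu => Finset.not_nonempty_iff_eq_empty.1 fun hb => hDB ⟨u, hu, hb⟩)
        omega
      have hP := (hW Q hQX).apply (d := d) lossT hB ⟨z, hzQ⟩ hC fun u hu => by
        have h8 := hdeg u (hQX hu)
        rw [hdegX u (hQX hu)] at h8
        have h9 : dg G X u ≤ dg G Q u := dg_le_of fun v hv ha => hcl u hu v hv ha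
        have h10 := hLT u (hQX hu)
        change d ≤ dg G Q u + ind (∃ v ∈ T, G.Adj u v) + _ + _
        omega
      refine P.gain 1 (le_max_left _ _) hP hGT (by omega) ?_
      rintro l m ⟨x, ⟨v, hv, hxv⟩, y, n, o, ho, hp, rfl⟩ hm
      obtain ⟨a, ha, hq⟩ := hm v hv
      exact ⟨a, ha, y, _, o, ho, hq.join' hp (hKX.mono_right hQX) hxv.symm
        Finset.subset_union_left (hQX.trans Finset.subset_union_right), by omega⟩
    · push Not at hQT
      have hprop : ∀ D ⊆ Q, D.Nonempty → D ≠ Q →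
          2 ≤ (bd G Q D).card + ind (∃ u ∈ D, (B u).Nonempty) := by
        intro D hD hne hDQ
        have h3 := (hcn D hD hne hDQ).card_pos
        by_cases hDB : ∃ u ∈ D, (B u).Nonempty
        · rw [ind_true hDB]; omega
        have := h1 D hD hne hDQ (fun u hu v hv ha => hQT u (hD hu) v hv ha)
          (fun u hu => Finset.not_nonempty_iff_eq_empty.1 fun hb => hDB ⟨u, hu, hb⟩)
        omega
      refine hfin Q B hQX ⟨z, hzQ⟩ hB hQT hprop hQB ?_ ?_ ?_ ?_ ?_
      · exact ⟨0, fun x y n o hp ho => ⟨y, n, o, ho, hp.mono hQX, rfl⟩⟩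
      · intro u hu
        have : dg G X u ≤ dg G Q u := dg_le_of fun v hv ha => hcl u hu v hv ha
        omega
      · intro hnoS
        have h6 := hI Q hQX ⟨z, hzQ⟩
        have h7 : (bd G (K ∪ X) Q).card ≤ (bd G Q Q).card := by
          refine bd_le fun v hv _ ⟨u, hu, ha⟩ => ?_
          rcases Finset.mem_union.1 hv with hv | hv
          · rw [hK, Finset.mem_union] at hv
            exact absurd ha (hv.elim (fun h => hnoS u hu v h) (fun h => hQT u hu v h))
          · exact hcl u hu v hv ha
        have h8 : (bd G Q Q).card = 0 := by
          rw [Finset.card_eq_zero, Finset.eq_empty_iff_forall_notMem]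
          intro v hv
          rw [mem_bd] at hv
          exact hv.2.1 hv.1
        have := ind_le (∃ u ∈ Q, (B u).Nonempty)
        exact of_ind_pos (by omega)
      · refine Or.inr fun s _ hs _ hexc => hexc Q ⟨hQX, ?_, hcn, hQT, hs, hQB, hprop, ?_⟩
        · rw [Finset.eq_empty_iff_forall_notMem]
          intro v hv
          obtain ⟨hvX, hvQ, u, hu, ha⟩ := mem_bd.1 hv
          exact hvQ (hcl u hu v hvX ha)
        · refine hpref.resolve_left ?_
          rintro ⟨u, hu, v, hv, ha⟩
          exact hQT u hu v hv ha
      · exact fun h => h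

end Instances

end KPaths

namespace KPaths

section Core

variable {V : Type*} {G : SimpleGraph V}

open scoped Classical

/-- A core `K = S ∪ T` for the rest `X` of the graph: the losses of degree in `X` caused by
passing to a subgraph of `X` attached to `T` (resp. only to `S`) are compensated by the lengths
of paths in `K` ending in `T` (resp. `S`). The only deficient case allowed on the side `S` is
that of a single vertex `s` joined to all of `T`. -/
structure Core (G : SimpleGraph V) (K X S T : Finset V) (A : Set V) : Prop where
  disj : Disjoint K X
  eq : K = S ∪ T
  sub : ∀ t ∈ T, t ∈ A
  lossT : ∃ l, (∀ u ∈ X, dg G K u + ind (u ∈ A) ≤ l + ind (∃ v ∈ T, G.Adj u v)) ∧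
    Gain l fun l => ∀ v ∈ T, ∃ a ∈ A, PL G K a v l
  lossS : (∃ l, (∀ u ∈ X, (∀ v ∈ T, ¬ G.Adj u v) →
        dg G S u + ind (u ∈ A) ≤ l + ind (∃ v ∈ S, G.Adj u v)) ∧
        Gain l fun l => ∀ v ∈ S, ∃ a ∈ A, PL G K a v l) ∨
      (∃ s, S = {s} ∧ s ∉ T ∧ T.Nonempty ∧ (∀ t ∈ T, G.Adj t s) ∧ ∀ t ∈ T, ∃ t' ∈ T, t' ≠ t)

/-- The exceptional configuration: the graph is cut at `s` into the part containing `T` and the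
part containing `Q`; either two lengths suffice, or the lengths of the two parts combine. -/
lemma exc_lemma {K X T Q : Finset V} {s : V} {A : Set V} {B : V → Finset ℕ} {d : ℕ}
    (hKX : Disjoint K X) (hK : K = {s} ∪ T) (hTA : ∀ t ∈ T, t ∈ A) (hB : Offs B) (hd : 2 ≤ d)
    (hC : Conn G (K ∪ X) A B)
    (hdeg : ∀ u ∈ K ∪ X, d ≤ dg G (K ∪ X) u + ind (u ∈ A) + (B u).card)
    (hW : ∀ D, D ⊂ K ∪ X → W G D) (hsT : s ∉ T) (hTne : T.Nonempty)
    (hTs : ∀ t ∈ T, G.Adj t s) (hT2 : ∀ t ∈ T, ∃ t' ∈ T, t' ≠ t) (hQ : Exc G X T s B Q) :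
    P d (Len G (K ∪ X) A B) := by
  set U := K ∪ X with hU
  have hsK : s ∈ K := by simp [hK]
  have hsU : s ∈ U := Finset.mem_union_left _ hsK
  have hsX : s ∉ X := Finset.disjoint_left.1 hKX hsK
  have hTK : T ⊆ K := by rw [hK]; exact Finset.subset_union_right
  have hTX : ∀ t ∈ T, t ∉ X := fun t ht => Finset.disjoint_left.1 hKX (hTK ht)
  set Y := X.filter (fun u => ∃ z ∈ X, (B z).Nonempty ∧ u ∈ comp G X z) with hY
  have memY : ∀ u, u ∈ Y ↔ u ∈ X ∧ ∃ z ∈ X, (B z).Nonempty ∧ u ∈ comp G X z := by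
    intro u; simp [hY]
  set R := (U.erase s) \ Y with hR
  have memR : ∀ u, u ∈ R ↔ u ≠ s ∧ u ∈ U ∧ u ∉ Y := by
    intro u; simp [hR, and_assoc]
  have hTR : T ⊆ R := fun t ht => (memR t).2 ⟨fun h => hsT (h ▸ ht),
    Finset.mem_union_left _ (hTK ht), fun h => hTX t ht ((memY t).1 h).1⟩
  have hRU : R ⊆ U := fun u hu => ((memR u).1 hu).2.1
  have hsR : s ∉ R := fun h => ((memR s).1 h).1 rfl
  have hRcl : ∀ u ∈ R, ∀ v ∈ U, G.Adj u v → v ∈ R ∨ v = s := by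
    intro u hu v hv ha
    by_contra hcon
    rw [not_or, memR] at hcon
    obtain ⟨h1, hvs⟩ := hcon
    have hvY : v ∈ Y := by by_contra h; exact h1 ⟨hvs, hv, h⟩
    obtain ⟨hvX, z, hz, hBz, hvz⟩ := (memY v).1 hvY
    obtain ⟨hus, huU, huY⟩ := (memR u).1 hu
    rcases Finset.mem_union.1 huU with huK | huX
    · rw [hK, Finset.mem_union, Finset.mem_singleton] at huK
      exact hQ.far z hz hBz v hvz u (huK.resolve_left hus) ha.symm
    · exact huY ((memY u).2 ⟨huX, z, hz, hBz, comp_closed hvz huX ha.symm⟩)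
  have hRB : ∀ u ∈ R, (B u).Nonempty → u ∈ T := by
    intro u hu hb
    obtain ⟨hus, huU, huY⟩ := (memR u).1 hu
    rcases Finset.mem_union.1 huU with huK | huX
    · rw [hK, Finset.mem_union, Finset.mem_singleton] at huK
      exact huK.resolve_left hus
    · exact absurd ((memY u).2 ⟨huX, u, huX, hb, self_mem_comp huX⟩) huY
  obtain ⟨z, hzQ, hBz⟩ := hQ.adjB
  have hQY : Q ⊆ Y := by
    intro u hu
    obtain ⟨n, hn⟩ := hQ.cn.path hzQ hu
    exact (memY u).2 ⟨hQ.sub hu, z, hQ.sub hzQ, hBz, mem_comp.2 ⟨n, hn.mono hQ.sub⟩⟩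
  have hRQ : Disjoint (insert s R) Q := by
    rw [Finset.disjoint_left]
    intro u hu huQ
    rcases Finset.mem_insert.1 hu with rfl | hu
    · exact hsX (hQ.sub huQ)
    · exact ((memR u).1 hu).2.2 (hQY huQ)
  have hsRU : insert s R ⊆ U := Finset.insert_subset hsU hRU
  have hQU : Q ⊆ U := hQ.sub.trans Finset.subset_union_right
  have hQU' : Q ⊂ U := Finset.ssubset_iff_subset_ne.2 ⟨hQU, fun h => hsX (hQ.sub (h ▸ hsU))⟩
  have hRU' : R ⊂ U := Finset.ssubset_iff_subset_ne.2 ⟨hRU, fun h => hsR (h ▸ hsU)⟩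
  have hRne : R.Nonempty := hTne.mono hTR
  have hCR : Conn G R A (nT G s) := by
    intro D hD hne
    simp only [nT_nonempty]
    by_cases hDB : ∃ u ∈ D, (B u).Nonempty
    · obtain ⟨t, ht, hb⟩ := hDB
      have htT := hRB t (hD ht) hb
      rw [ind_true (p := ∃ u ∈ D, u ∈ A) ⟨t, ht, hTA t htT⟩, ind_true ⟨t, ht, hTs t htT⟩]
      omega
    · have h1 := hC D (hD.trans hRU) hne
      rw [ind_false hDB] at h1
      have h2 := bd_le_ind (G := G) (U := U) (U' := R) (D := D) (c := s)
        (fun v hv _ ⟨u, hu, ha⟩ => hRcl u (hD hu) v hv ha)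
      omega
  have hdegR : ∀ u ∈ R, d ≤ dg G R u + ind (u ∈ A) + (nT G s u).card + (B u).card := by
    intro u hu
    have h1 := hdeg u (hRU hu)
    have h2 := dg_le_ind (G := G) (U := U) (U' := R) (u := u) (c := s) (hRcl u hu)
    rw [nT_card]
    omega
  by_cases hTB : ∃ t ∈ T, (B t).Nonempty
  · rcases Nat.lt_or_ge 4 d with hd5 | hd4
    · have hP1 := (hW R hRU').apply (d := d) 2 (nT_offs s) hRne hCR fun u hu => by
        have := hdegR u hu; have := hB.card_le u; omega
      have hCQ : Conn G Q (nS G {s}) B :=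
        conn_of_proper hQ.proper (by simpa [mem_nS] using hQ.adjS) hQ.adjB
      have hP2 := (hW Q hQU').apply (d := d) 1 hB ⟨z, hzQ⟩ hCQ fun u hu => by
        have h1 := hdeg u (hQU hu)
        have h2 : dg G U u ≤ dg G Q u + ind (G.Adj u s) := by
          refine dg_le_ind fun v hv ha => ?_
          rcases Finset.mem_union.1 hv with hv | hv
          · rw [hK, Finset.mem_union, Finset.mem_singleton] at hv
            exact Or.inr (hv.resolve_right fun h => hQ.noT u hu v h ha)
          · left
            by_contra hvQ
            have : v ∈ bd G X Q := mem_bd.2 ⟨hv, hvQ, u, hu, ha⟩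
            rw [hQ.closed] at this
            simp at this
        have h3 : ind (u ∈ nS G {s}) = ind (G.Adj u s) := by simp [mem_nS]
        have := ind_le (u ∈ A)
        omega
      refine P.comb 2 (by omega) (hP1.anti (by omega)) (hP2.anti (by omega)) ?_
      rintro l m ⟨x, hx, y, n, o, ho, hp, rfl⟩ ⟨x', ⟨s', hs', hxs⟩, y', n', o', ho', hp', rfl⟩
      rw [Finset.mem_singleton] at hs'
      subst hs'
      rw [mem_nT] at ho
      have hp1 := hp.snoc ho.2 hsR (Finset.subset_insert _ _) (Finset.mem_insert_self _ _)
      exact ⟨x, hx, y', _, o', ho', hp1.join' hp' hRQ hxs.symm hsRU hQU, by omega⟩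
    · obtain ⟨t, ht, o, ho⟩ := hTB
      obtain ⟨t', ht', hne⟩ := hT2 t ht
      have htU : t ∈ U := hRU (hTR ht)
      refine P.of_four o hd4 ⟨t, hTA t ht, t, 0, o, ho, .nil htU, by omega⟩
        ⟨t', hTA t' ht', t, 2, o, ho, ?_, by omega⟩
      refine .cons (hRU (hTR ht')) (hTs t' ht') (.cons ?_ (hTs t ht).symm (.nil ?_))
      · exact Finset.mem_erase.2 ⟨(hTs t' ht').ne', hsU⟩
      · exact Finset.mem_erase.2 ⟨(hTs t ht).ne, Finset.mem_erase.2 ⟨hne.symm, htU⟩⟩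
  · have hP := hW R hRU' A (nT G s) d (nT_offs s) hRne hCR hd fun u hu => by
      have h1 := hdegR u hu
      have : (B u).card = 0 := by
        rw [Finset.card_eq_zero]
        exact Finset.not_nonempty_iff_eq_empty.1 fun h => hTB ⟨u, hRB u hu h, h⟩
      omega
    obtain ⟨q, hq, hqs⟩ := hQ.adjS
    obtain ⟨m, hm⟩ := hQ.cn.path hq hzQ
    obtain ⟨o', ho'⟩ := hBz
    refine hP.shift (2 + m + o') ?_
    rintro l ⟨x, hx, y, n, o, ho, hp, rfl⟩
    rw [mem_nT] at ho
    have hp1 := hp.snoc ho.2 hsR (Finset.subset_insert _ _) (Finset.mem_insert_self _ _)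
    exact ⟨x, hx, z, _, o', ho', hp1.join' hm hRQ hqs.symm hsRU hQU, by omega⟩

/-- A core covering the graph outside of `X`, with a target vertex in `X`. -/
lemma Core.alpha {K X S T : Finset V} {A : Set V} {B : V → Finset ℕ} {d : ℕ}
    (h : Core G K X S T A) (hKne : K.Nonempty) (hB : Offs B) (hd : 2 ≤ d)
    (hC : Conn G (K ∪ X) A B)
    (hdeg : ∀ u ∈ K ∪ X, d ≤ dg G (K ∪ X) u + ind (u ∈ A) + (B u).card)
    (hW : ∀ D, D ⊂ K ∪ X → W G D) (hBX : ∃ u ∈ X, (B u).Nonempty) :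
    P d (Len G (K ∪ X) A B) := by
  obtain ⟨lT, hLT, hGT⟩ := h.lossT
  refine core_lemma h.disj h.eq h.sub hB hBX hd
    (fun D hD hne => hC D (hD.trans Finset.subset_union_right) hne)
    (fun u hu => hdeg u (Finset.mem_union_right _ hu)) (fun D hD => hW D ?_) hLT hGT ?_
  · refine Finset.ssubset_iff_subset_ne.2 ⟨hD.trans Finset.subset_union_right, ?_⟩
    rintro rfl
    obtain ⟨k, hk⟩ := hKne
    exact Finset.disjoint_left.1 h.disj hk (hD (Finset.mem_union_left _ hk))
  · rcases h.lossS with hS | ⟨s, rfl, hsT, ⟨t, ht⟩, hTs, hT2⟩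
    · exact Or.inl hS
    · exact Or.inr ⟨s, t, rfl, ht, hTs t ht, Or.inr fun Q hQ =>
        exc_lemma h.disj h.eq h.sub hB hd hC hdeg hW hsT ⟨t, ht⟩ hTs hT2 hQ⟩

/-- When all target vertices outside the core coincide with `w`, the vertex `w` itself serves as
an unweighted target for `U \ {w}`. -/
lemma Core.beta {U K X S T : Finset V} {w : V} {A : Set V} {B : V → Finset ℕ} {d : ℕ}
    (h : Core G K X S T A) (hwU : w ∈ U) (hU : U.erase w = K ∪ X) (hd : 2 ≤ d)
    (hC : Conn G U A B) (hdeg : ∀ u ∈ U, d ≤ dg G U u + ind (u ∈ A) + (B u).card)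
    (hW : ∀ D, D ⊂ U → W G D) (hBw : (B w).Nonempty) (hBX : ∀ u ∈ X, ¬ (B u).Nonempty)
    (hwX : ∃ u ∈ X, G.Adj u w) : P d (Len G U A B) := by
  obtain ⟨lT, hLT, hGT⟩ := h.lossT
  have hXU : X ⊆ U := by
    refine Finset.Subset.trans ?_ (Finset.erase_subset w U)
    rw [hU]; exact Finset.subset_union_right
  have hwX' : w ∉ X := fun hc => by
    have : w ∈ U.erase w := by rw [hU]; exact Finset.mem_union_right _ hc
    simp at this
  have hE : ∀ v ∈ U, v ∈ K ∪ X ∨ v = w := by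
    intro v hv
    rw [← hU, Finset.mem_erase]
    tauto
  have hP : P d (Len G (K ∪ X) A (nT G w)) := by
    refine core_lemma h.disj h.eq h.sub (nT_offs w)
      (by simpa only [nT_nonempty] using hwX) hd (fun D hD hne => ?_) (fun u hu => ?_)
      (fun D hD => hW D ?_) hLT hGT ?_
    · simp only [nT_nonempty]
      have h1 := hC D (hD.trans hXU) hne
      rw [ind_false (p := ∃ u ∈ D, (B u).Nonempty) fun ⟨u, hu, hb⟩ => hBX u (hD hu) hb] at h1
      have h2 := bd_le_ind (G := G) (U := U) (U' := K ∪ X) (D := D) (c := w)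
        (fun v hv _ _ => hE v hv)
      omega
    · have h1 := hdeg u (hXU hu)
      have h2 := dg_le_ind (G := G) (U := U) (U' := K ∪ X) (u := u) (c := w)
        (fun v hv _ => hE v hv)
      rw [Finset.not_nonempty_iff_eq_empty.1 (hBX u hu)] at h1
      rw [nT_card]
      simp at h1
      omega
    · exact Finset.ssubset_iff_subset_ne.2 ⟨hD.trans hXU, fun e => hwX' (hD (e ▸ hwU))⟩
    · rcases h.lossS with hS | ⟨s, rfl, hsT, ⟨t, ht⟩, hTs, hT2⟩
      · exact Or.inl hS
      · exact Or.inr ⟨s, t, rfl, ht, hTs t ht, Or.inl ⟨w, fun _ => rfl⟩⟩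
  obtain ⟨o', ho'⟩ := hBw
  refine hP.shift (1 + o') ?_
  rintro l ⟨x, hx, y, n, o, ho, hp, rfl⟩
  rw [mem_nT] at ho
  rw [← hU] at hp
  exact ⟨x, hx, w, n + 1, o', ho', hp.snoc ho.2 (by simp) (Finset.erase_subset _ _) hwU,
    by omega⟩

end Core

end KPaths

namespace KPaths

section Main

variable {V : Type*} {G : SimpleGraph V}

open scoped Classical

/-! ### Almost balanced complete bipartite cores -/

/-- Alternating paths in a complete bipartite graph, of all lengths the sides have room for. -/
lemma alt_both (j : ℕ) : ∀ S T : Finset V, Disjoint S T → (∀ s ∈ S, ∀ t ∈ T, G.Adj t s) →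
    (j ≤ S.card → j + 1 ≤ T.card → ∀ t ∈ T, ∃ a ∈ T, PL G (S ∪ T) a t (2 * j)) ∧
    (j + 1 ≤ S.card → j + 1 ≤ T.card → ∀ s ∈ S, ∃ a ∈ T, PL G (S ∪ T) a s (2 * j + 1)) := by
  -- the second claim for `j` follows from the first
  have key : ∀ j, (∀ S T : Finset V, Disjoint S T → (∀ s ∈ S, ∀ t ∈ T, G.Adj t s) →
      j ≤ S.card → j + 1 ≤ T.card → ∀ t ∈ T, ∃ a ∈ T, PL G (S ∪ T) a t (2 * j)) →
      ∀ S T : Finset V, Disjoint S T → (∀ s ∈ S, ∀ t ∈ T, G.Adj t s) →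
      j + 1 ≤ S.card → j + 1 ≤ T.card → ∀ s ∈ S, ∃ a ∈ T, PL G (S ∪ T) a s (2 * j + 1) := by
    intro j h S T hd hb hS hT s hs
    obtain ⟨t, ht⟩ : T.Nonempty := Finset.card_pos.1 (by omega)
    have hc := Finset.card_erase_of_mem hs
    obtain ⟨a, ha, hp⟩ := h (S.erase s) T (hd.mono_left (Finset.erase_subset _ _))
      (fun s' hs' t' ht' => hb s' (Finset.mem_of_mem_erase hs') t' ht') (by omega) hT t ht
    refine ⟨a, ha, hp.snoc (hb s hs t ht) ?_
      (Finset.union_subset_union_left (Finset.erase_subset _ _)) (Finset.mem_union_left _ hs)⟩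
    simp [Finset.disjoint_left.1 hd hs]
  induction j with
  | zero =>
    have h0 : ∀ S T : Finset V, Disjoint S T → (∀ s ∈ S, ∀ t ∈ T, G.Adj t s) →
        0 ≤ S.card → 0 + 1 ≤ T.card → ∀ t ∈ T, ∃ a ∈ T, PL G (S ∪ T) a t (2 * 0) :=
      fun S T _ _ _ _ t ht => ⟨t, ht, .nil (Finset.mem_union_right _ ht)⟩
    exact fun S T hd hb => ⟨h0 S T hd hb, key 0 h0 S T hd hb⟩
  | succ j ih =>
    have h1 : ∀ S T : Finset V, Disjoint S T → (∀ s ∈ S, ∀ t ∈ T, G.Adj t s) →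
        j + 1 ≤ S.card → j + 1 + 1 ≤ T.card → ∀ t ∈ T,
        ∃ a ∈ T, PL G (S ∪ T) a t (2 * (j + 1)) := by
      intro S T hd hb hS hT t ht
      obtain ⟨s, hs⟩ : S.Nonempty := Finset.card_pos.1 (by omega)
      have hc := Finset.card_erase_of_mem ht
      obtain ⟨a, ha, hp⟩ := (ih S (T.erase t) (hd.mono_right (Finset.erase_subset _ _))
        (fun s' hs' t' ht' => hb s' hs' t' (Finset.mem_of_mem_erase ht'))).2 hS (by omega) s hs
      refine ⟨a, Finset.mem_of_mem_erase ha, hp.snoc (hb s hs t ht).symm ?_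
        (Finset.union_subset_union_right (Finset.erase_subset _ _)) (Finset.mem_union_right _ ht)⟩
      simp [Finset.disjoint_right.1 hd ht]
    exact fun S T hd hb => ⟨h1 S T hd hb, key (j + 1) h1 S T hd hb⟩

/-- A complete bipartite graph with sides `S` and `T ⊆ A`, where `T` has one vertex more. -/
structure OddCore (G : SimpleGraph V) (U : Finset V) (A : Set V) (S T : Finset V) : Prop where
  subS : S ⊆ U
  subT : T ⊆ U
  disj : Disjoint S T
  bip : ∀ s ∈ S, ∀ t ∈ T, G.Adj t s
  subA : ∀ t ∈ T, t ∈ A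
  card : T.card = S.card + 1

/-- An odd core together with one more vertex `v ∈ A` joined to all of it. -/
structure EvenCore (G : SimpleGraph V) (U : Finset V) (A : Set V) (S T : Finset V) (v : V) :
    Prop extends OddCore G U A S T where
  memU : v ∈ U
  memA : v ∈ A
  not_mem : v ∉ S ∪ T
  adj : ∀ u ∈ S ∪ T, G.Adj u v

/-- `K` is the vertex set of an odd or even core with `m` vertices. -/
def IsCore (G : SimpleGraph V) (U : Finset V) (A : Set V) (m : ℕ) (K : Finset V) : Prop :=
  (∃ S T, OddCore G U A S T ∧ K = S ∪ T ∧ m = 2 * S.card + 1) ∨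
    ∃ S T v, EvenCore G U A S T v ∧ K = insert v (S ∪ T) ∧ m = 2 * S.card + 2

section Cores

variable {U S T : Finset V} {A : Set V} {v : V}

lemma OddCore.lenT (h : OddCore G U A S T) {j : ℕ} (hj : j ≤ S.card) :
    ∀ t ∈ T, ∃ a ∈ T, PL G (S ∪ T) a t (2 * j) :=
  (alt_both j S T h.disj h.bip).1 hj (by have := h.card; omega)

lemma OddCore.lenS (h : OddCore G U A S T) {j : ℕ} (hj : j < S.card) :
    ∀ s ∈ S, ∃ a ∈ T, PL G (S ∪ T) a s (2 * j + 1) :=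
  (alt_both j S T h.disj h.bip).2 hj (by have := h.card; omega)

lemma OddCore.subU (h : OddCore G U A S T) : S ∪ T ⊆ U := Finset.union_subset h.subS h.subT

lemma OddCore.card_union (h : OddCore G U A S T) : (S ∪ T).card = 2 * S.card + 1 := by
  rw [Finset.card_union_of_disjoint h.disj, h.card]; omega

lemma EvenCore.subU' (h : EvenCore G U A S T v) : insert v (S ∪ T) ⊆ U :=
  Finset.insert_subset h.memU h.toOddCore.subU

lemma EvenCore.card_K (h : EvenCore G U A S T v) :
    (insert v (S ∪ T)).card = 2 * S.card + 2 := by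
  rw [Finset.card_insert_of_notMem h.not_mem, h.card_union]

/-- A vertex of `A` joined to an odd core extends it to an even core. -/
lemma OddCore.extend (h : OddCore G U A S T) {u : V} (hu : u ∈ U) (huA : u ∈ A)
    (huK : u ∉ S ∪ T) (ha : ∀ x ∈ S ∪ T, G.Adj u x) : EvenCore G U A S T u :=
  ⟨h, hu, huA, huK, fun x hx => (ha x hx).symm⟩

/-- A vertex of `A` joined to the side `S ∪ {v}` of an even core extends it to an odd core. -/
lemma EvenCore.extend (h : EvenCore G U A S T v) {u : V} (hu : u ∈ U) (huA : u ∈ A)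
    (huK : u ∉ insert v (S ∪ T)) (ha : ∀ x ∈ insert v S, G.Adj u x) :
    OddCore G U A (insert v S) (insert u T) := by
  have hv := h.not_mem
  simp only [Finset.mem_insert, Finset.mem_union, not_or] at huK hv
  refine ⟨Finset.insert_subset h.memU h.subS, Finset.insert_subset hu h.subT, ?_, ?_, ?_, ?_⟩
  · rw [Finset.disjoint_insert_left, Finset.disjoint_insert_right]
    simp only [Finset.mem_insert, not_or]
    exact ⟨⟨fun e => huK.1 e.symm, hv.2⟩, huK.2.1, h.disj⟩
  · intro s hs t ht
    rcases Finset.mem_insert.1 ht with rfl | ht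
    · exact ha s hs
    · rcases Finset.mem_insert.1 hs with rfl | hs
      · exact h.adj t (Finset.mem_union_right _ ht)
      · exact h.bip s hs t ht
  · intro t ht
    rcases Finset.mem_insert.1 ht with rfl | ht
    · exact huA
    · exact h.subA t ht
  · rw [Finset.card_insert_of_notMem huK.2.2, Finset.card_insert_of_notMem hv.1, h.card]

/-- A vertex joined to all of an odd core is not in `A`, so the loss is at most `2 |S|`, the
gain of the `|S| + 1` alternating path lengths. -/
lemma OddCore.core (h : OddCore G U A S T) (hr : 1 ≤ S.card) {X : Finset V}
    (hX : Disjoint (S ∪ T) X) (hadd : ∀ u ∈ X, ¬ (u ∈ A ∧ ∀ x ∈ S ∪ T, G.Adj u x)) :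
    Core G (S ∪ T) X S T A := by
  have hcard := h.card_union
  have hT := h.card
  refine ⟨hX, rfl, h.subA, ⟨2 * S.card, fun u hu => ?_, 0, Or.inl ⟨S.card + 1, by omega,
    by omega, fun j hj t ht => ?_⟩⟩, ?_⟩
  · have h1 : dg G (S ∪ T) u + ind (u ∈ A) ≤ 2 * S.card + 1 := by
      have := dg_le_card (G := G) (S ∪ T) u
      have := ind_le (u ∈ A)
      by_contra hcon
      exact hadd u hu ⟨of_ind_pos (by omega), dg_full (by omega)⟩
    by_cases huT : ∃ v ∈ T, G.Adj u v
    · rw [ind_true huT]; exact h1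
    · have h2 : dg G T u = 0 := dg_eq_zero fun v hv ha => huT ⟨v, hv, ha⟩
      have h3 := dg_union (G := G) h.disj u
      have := dg_le_card (G := G) S u
      have := ind_le (u ∈ A)
      omega
  · obtain ⟨a, ha, hp⟩ := h.lenT (j := j) (by omega) t ht
    exact ⟨a, h.subA a ha, by simpa using hp⟩
  · rcases Nat.lt_or_ge 1 S.card with h2 | h2
    · refine Or.inl ⟨2 * S.card - 2, fun u hu _ => ?_, 1, Or.inl ⟨S.card, by omega, by omega,
        fun j hj s hs => ?_⟩⟩
      · have := dg_le_card (G := G) S u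
        have := ind_le (u ∈ A)
        by_cases huS : ∃ v ∈ S, G.Adj u v
        · rw [ind_true huS]; omega
        · have : dg G S u = 0 := dg_eq_zero fun v hv ha => huS ⟨v, hv, ha⟩
          omega
      · obtain ⟨a, ha, hp⟩ := h.lenS hj s hs
        exact ⟨a, h.subA a ha, by rwa [Nat.add_comm 1]⟩
    · obtain ⟨s, rfl⟩ := Finset.card_eq_one.1 (show S.card = 1 by omega)
      refine Or.inr ⟨s, rfl, ?_, ?_, ?_, ?_⟩
      · exact Finset.disjoint_left.1 h.disj (by simp)
      · exact Finset.card_pos.1 (by omega)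
      · exact fun t ht => h.bip s (by simp) t ht
      · intro t ht
        obtain ⟨t', ht', hne⟩ := Finset.exists_mem_ne (s := T) (by simp at hT; omega) t
        exact ⟨t', ht', hne⟩

/-- The extra vertex `v` is moved to the side `S`; starting at `T` or at `v` gives paths of both
parities, so consecutive lengths, to each vertex of the core. -/
lemma EvenCore.core (h : EvenCore G U A S T v) (hr : 1 ≤ S.card) {X : Finset V}
    (hX : Disjoint (insert v (S ∪ T)) X)
    (hadd : ∀ u ∈ X, ¬ (u ∈ A ∧ ∀ x ∈ insert v S, G.Adj u x)) :
    Core G (insert v (S ∪ T)) X (insert v S) T A := by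
  have hT := h.card
  have hv := h.not_mem
  simp only [Finset.mem_union, not_or] at hv
  have hS' : (insert v S).card = S.card + 1 := Finset.card_insert_of_notMem hv.1
  have hK : insert v (S ∪ T) = insert v S ∪ T := (Finset.insert_union v S T).symm
  have hdis : Disjoint (insert v S) T := by
    rw [Finset.disjoint_insert_left]; exact ⟨hv.2, h.disj⟩
  have hsub : S ∪ T ⊆ insert v (S ∪ T) := Finset.subset_insert _ _
  have hvK : v ∈ insert v (S ∪ T) := Finset.mem_insert_self _ _
  have hTK : ∀ a ∈ T, G.Adj a v := fun a ha => h.adj a (Finset.mem_union_right _ ha)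
  have hSb : ∀ u ∈ X, dg G (insert v S) u + ind (u ∈ A) ≤ S.card + 1 := by
    intro u hu
    have := dg_le_card (G := G) (insert v S) u
    have := ind_le (u ∈ A)
    by_contra hcon
    exact hadd u hu ⟨of_ind_pos (by omega), dg_full (by omega)⟩
  refine ⟨hX, hK, h.subA, ⟨2 * S.card + 1, fun u hu => ?_, 0, Or.inr fun j hj t ht => ?_⟩,
    Or.inl ⟨2 * S.card - 1, fun u hu _ => ?_, 1, Or.inr fun j hj s hs => ?_⟩⟩
  · have h1 := hSb u hu
    have h2 := dg_union (G := G) hdis u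
    have h3 := dg_le_card (G := G) T u
    rw [← hK] at h2
    by_cases huT : ∃ v ∈ T, G.Adj u v
    · rw [ind_true huT]; omega
    · have : dg G T u = 0 := dg_eq_zero fun v hv ha => huT ⟨v, hv, ha⟩
      omega
  · obtain ⟨a, ha, hp⟩ := h.lenT (j := j / 2) (by omega) t ht
    rcases Nat.even_or_odd' j with ⟨i, rfl | rfl⟩
    · exact ⟨a, h.subA a ha, by
        have : 0 + 2 * i = 2 * (2 * i / 2) := by omega
        rw [this]; exact hp.mono hsub⟩
    · refine ⟨v, h.memA, ?_⟩
      have : 0 + (2 * i + 1) = 2 * ((2 * i + 1) / 2) + 1 := by omega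
      rw [this]
      exact hp.prep (hTK a ha).symm h.not_mem hsub hvK
  · have := hSb u hu
    have := ind_le (u ∈ A)
    by_cases huS : ∃ x ∈ insert v S, G.Adj u x
    · rw [ind_true huS]; omega
    · have : dg G (insert v S) u = 0 := dg_eq_zero fun v hv ha => huS ⟨v, hv, ha⟩
      omega
  · obtain ⟨i, hi | hi⟩ := Nat.even_or_odd' j
    · rcases Finset.mem_insert.1 hs with rfl | hs
      · obtain ⟨t, ht⟩ : T.Nonempty := Finset.card_pos.1 (by omega)
        obtain ⟨a, ha, hp⟩ := h.lenT (j := i) (by omega) t ht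
        refine ⟨a, h.subA a ha, ?_⟩
        rw [show 1 + j = 2 * i + 1 by omega]
        exact hp.snoc (hTK t ht) h.not_mem hsub hvK
      · obtain ⟨a, ha, hp⟩ := h.lenS (j := i) (by omega) s hs
        refine ⟨a, h.subA a ha, ?_⟩
        rw [show 1 + j = 2 * i + 1 by omega]
        exact hp.mono hsub
    · rcases Finset.mem_insert.1 hs with rfl | hs
      · obtain ⟨s', hs'⟩ : S.Nonempty := Finset.card_pos.1 (by omega)
        obtain ⟨a, ha, hp⟩ := h.lenS (j := i) (by omega) s' hs'
        refine ⟨a, h.subA a ha, ?_⟩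
        rw [show 1 + j = 2 * i + 1 + 1 by omega]
        exact hp.snoc (h.adj s' (Finset.mem_union_left _ hs')) h.not_mem hsub hvK
      · obtain ⟨a, ha, hp⟩ := h.lenS (j := i) (by omega) s hs
        refine ⟨v, h.memA, ?_⟩
        rw [show 1 + j = 2 * i + 1 + 1 by omega]
        exact hp.prep (hTK a ha).symm h.not_mem hsub hvK

/-- The core consisting of an edge inside `A`. -/
lemma core_two {t v : V} (htv : G.Adj t v) (htA : t ∈ A) (hvA : v ∈ A) {X : Finset V}
    (hX : Disjoint {t, v} X) (hadd : ∀ u ∈ X, ¬ (u ∈ A ∧ (G.Adj u t ∨ G.Adj u v))) :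
    Core G {t, v} X ∅ {t, v} A := by
  refine ⟨hX, by simp, by simp [htA, hvA], ⟨1, fun u hu => ?_, 0, Or.inr fun j hj w hw => ?_⟩,
    Or.inl ⟨1, fun u hu _ => ?_, 0, Or.inr fun j hj w hw => by simp at hw⟩⟩
  · by_cases huT : ∃ x ∈ ({t, v} : Finset V), G.Adj u x
    · have h1 := dg_le_card (G := G) {t, v} u
      have h2 : ({t, v} : Finset V).card ≤ 2 := Finset.card_le_two
      have h3 : u ∉ A := fun h => hadd u hu ⟨h, by simpa using huT⟩
      rw [ind_true huT, ind_false h3]; omega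
    · have : dg G {t, v} u = 0 := dg_eq_zero fun v hv ha => huT ⟨v, hv, ha⟩
      have := ind_le (u ∈ A)
      omega
  · obtain rfl | rfl : j = 0 ∨ j = 1 := by omega
    · have hwA : w ∈ A := by
        simp only [Finset.mem_insert, Finset.mem_singleton] at hw
        rcases hw with rfl | rfl <;> assumption
      exact ⟨w, hwA, .nil hw⟩
    · simp only [Finset.mem_insert, Finset.mem_singleton] at hw
      rcases hw with rfl | rfl
      · exact ⟨v, hvA, .cons (by simp) htv.symm (.nil (by simp [htv.ne]))⟩
      · exact ⟨t, htA, .cons (by simp) htv (.nil (by simp [htv.ne']))⟩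
  · have : dg G ∅ u = 0 := dg_eq_zero (by simp)
    have := ind_le (u ∈ A)
    omega

end Cores

end Main

end KPaths

namespace KPaths

section Induction

variable {V : Type*} {G : SimpleGraph V}

open scoped Classical

/-! ### The induction -/

/-- The data of an induction step: an instance on `U`, with the induction hypothesis for all
proper subsets of `U`. -/
structure Inst (G : SimpleGraph V) (U : Finset V) (A : Set V) (B : V → Finset ℕ) (d : ℕ) :
    Prop where
  offs : Offs B
  two_le : 2 ≤ d
  ne : U.Nonempty
  conn : Conn G U A B
  deg : ∀ u ∈ U, d ≤ dg G U u + ind (u ∈ A) + (B u).card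
  ih : ∀ D, D ⊂ U → W G D

namespace Inst

variable {U : Finset V} {A : Set V} {B : V → Finset ℕ} {d : ℕ}

lemma whole (h : Inst G U A B d) : (∃ u ∈ U, u ∈ A) ∧ ∃ u ∈ U, (B u).Nonempty := by
  have h1 := h.conn U subset_rfl h.ne
  have h2 : (bd G U U).card = 0 := by
    rw [Finset.card_eq_zero, Finset.eq_empty_iff_forall_notMem]
    intro v hv
    rw [mem_bd] at hv
    exact hv.2.1 hv.1
  have h3 := ind_le (∃ u ∈ U, u ∈ A)
  have h4 := ind_le (∃ u ∈ U, (B u).Nonempty)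
  exact ⟨of_ind_pos (by omega), of_ind_pos (by omega)⟩

/-- Finishing with the path lengths to a single target vertex `w`. -/
lemma explicit (h : Inst G U A B d) {w : V} (hBw : (B w).Nonempty) {e : ℕ}
    (he : 2 ≤ e) (hP : P e fun l => ∃ a ∈ A, PL G U a w l) (hde : d + 1 ≤ e + (B w).card) :
    P d (Len G U A B) := by
  rcases Nat.lt_or_ge (B w).card 2 with h1 | h1
  · obtain ⟨o, ho⟩ := hBw
    refine (hP.shift (L' := Len G U A B) o ?_).anti (by omega)
    rintro l ⟨a, ha, hp⟩
    exact ⟨a, ha, w, l, o, ho, hp, rfl⟩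
  · have h2 := h.offs.card_le w
    have h3 := h.offs.two h1
    refine P.gain (g := 2) (L2 := fun o => o ∈ B w) 0 he hP ⟨0, Or.inl ⟨2, by omega, by omega,
      fun j hj => ?_⟩⟩ (by omega) ?_
    · obtain rfl | rfl : j = 0 ∨ j = 1 := by omega
      · exact h3.1
      · exact h3.2
    · rintro l o ⟨a, ha, hp⟩ ho
      exact ⟨a, ha, w, l, o, ho, hp, rfl⟩

lemma isolated (h : Inst G U A B d) {w : V} (hw : w ∈ U) (hBw : (B w).Nonempty)
    (h0 : dg G U w = 0) : P d (Len G U A B) := by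
  have h1 := h.conn {w} (by simpa using hw) (by simp)
  have h2 : (bd G U {w}).card = 0 := by
    rw [Finset.card_eq_zero, Finset.eq_empty_iff_forall_notMem]
    intro v hv
    obtain ⟨hvU, -, u, hu, ha⟩ := mem_bd.1 hv
    have : 0 < dg G U w := dg_pos.2 ⟨v, hvU, Finset.mem_singleton.1 hu ▸ ha⟩
    omega
  have hwA : w ∈ A := by
    have h3 := ind_le (∃ u ∈ ({w} : Finset V), (B u).Nonempty)
    obtain ⟨u, hu, huA⟩ := of_ind_pos (p := ∃ u ∈ ({w} : Finset V), u ∈ A) (by omega)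
    rw [Finset.mem_singleton] at hu
    exact hu ▸ huA
  have h4 := h.deg w hw
  rw [h0, ind_true hwA] at h4
  exact h.explicit hBw le_rfl (P.of_two 0 le_rfl ⟨w, hwA, .nil hw⟩) (by omega)

/-- Only one vertex is attached to the target. -/
lemma single (h : Inst G U A B d) {w : V} (hw : w ∈ U) (hBw : (B w).Nonempty)
    (huniq : ∀ u ∈ U, (B u).Nonempty → u = w) : P d (Len G U A B) := by
  by_cases hn : ∃ u ∈ U, G.Adj w u
  · obtain ⟨u, hu, ha⟩ := hn
    have hcore : Core G ∅ (U.erase w) ∅ ∅ A := by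
      refine ⟨by simp, by simp, by simp, ⟨1, fun u hu => ?_, 0, Or.inr fun j hj v hv => ?_⟩,
        Or.inl ⟨1, fun u hu _ => ?_, 0, Or.inr fun j hj v hv => ?_⟩⟩
      · have : dg G ∅ u = 0 := dg_eq_zero (by simp)
        have := ind_le (u ∈ A)
        omega
      · simp at hv
      · have : dg G ∅ u = 0 := dg_eq_zero (by simp)
        have := ind_le (u ∈ A)
        omega
      · simp at hv
    exact hcore.beta hw (by simp) h.two_le h.conn h.deg h.ih hBw
      (fun v hv hb => Finset.ne_of_mem_erase hv (huniq v (Finset.mem_of_mem_erase hv) hb))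
      ⟨u, Finset.mem_erase.2 ⟨ha.ne', hu⟩, ha.symm⟩
  · push Not at hn
    exact h.isolated hw hBw (dg_eq_zero hn)

/-- Given a maximal core `K`, either no outside vertex extends it, and the core lemma applies
with the given target; or the vertex extending it is the only target vertex outside `K`. -/
lemma step (h : Inst G U A B d) {K S T : Finset V} (hKU : K ⊆ U) (hKne : K.Nonempty)
    (grow : V → Prop)
    (hcore : ∀ X, Disjoint K X → X ⊆ U → (∀ u ∈ X, ¬ grow u) → Core G K X S T A)
    (hadd : ∀ u ∈ U, u ∉ K → grow u → ∀ u' ∈ U, (B u').Nonempty → u' ∈ K ∨ u' = u)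
    (hsupp : ∃ u ∈ U, u ∉ K ∧ (B u).Nonempty)
    (hexpl : ∀ w ∈ U, w ∉ K → grow w → (B w).Nonempty → (∀ u ∈ U, G.Adj w u → u ∈ K) →
      P d (Len G U A B)) : P d (Len G U A B) := by
  obtain ⟨z, hzU, hzK, hBz⟩ := hsupp
  by_cases hex : ∃ w ∈ U, w ∉ K ∧ grow w
  · obtain ⟨w, hwU, hwK, hw⟩ := hex
    have hzw : z = w := (hadd w hwU hwK hw z hzU hBz).resolve_left hzK
    subst hzw
    have huniq : ∀ u ∈ (U \ K).erase z, u ∈ U ∧ u ∉ K ∧ u ≠ z := by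
      intro u hu
      simp only [Finset.mem_erase, Finset.mem_sdiff] at hu
      exact ⟨hu.2.1, hu.2.2, hu.1⟩
    by_cases hn : ∃ u ∈ (U \ K).erase z, G.Adj u z
    · refine (hcore ((U \ K).erase z) ?_ ?_ fun u hu ha => ?_).beta hwU ?_ h.two_le h.conn h.deg
        h.ih hBz (fun u hu hb => ?_) hn
      · exact Finset.disjoint_sdiff.mono_right (Finset.erase_subset _ _)
      · exact fun u hu => (huniq u hu).1
      · obtain ⟨h1, h2, h3⟩ := huniq u hu
        exact ((hadd u h1 h2 ha z hzU hBz).resolve_left hzK |> Eq.symm |> h3)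
      · ext u
        simp only [Finset.mem_erase, Finset.mem_union, Finset.mem_sdiff]
        constructor
        · rintro ⟨h1, h2⟩
          by_cases hu : u ∈ K
          · exact Or.inl hu
          · exact Or.inr ⟨h1, h2, hu⟩
        · rintro (hu | hu)
          · exact ⟨fun e => hzK (e ▸ hu), hKU hu⟩
          · exact ⟨hu.1, hu.2.1⟩
      · obtain ⟨h1, h2, h3⟩ := huniq u hu
        exact h3 ((hadd z hwU hwK hw u h1 hb).resolve_left h2)
    · refine hexpl z hwU hwK hw hBz fun u hu ha => ?_
      by_contra huK
      exact hn ⟨u, by simp [hu, huK, ha.ne'], ha.symm⟩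
  · push Not at hex
    have hUK : K ∪ (U \ K) = U := Finset.union_sdiff_of_subset hKU
    have hc := hcore (U \ K) Finset.disjoint_sdiff Finset.sdiff_subset fun u hu => by
      rw [Finset.mem_sdiff] at hu
      exact hex u hu.1 hu.2
    have := hc.alpha (B := B) (d := d) hKne h.offs h.two_le (by rw [hUK]; exact h.conn)
      (by rw [hUK]; exact h.deg) (by rw [hUK]; exact h.ih) ⟨z, by simp [hzU, hzK], hBz⟩
    rwa [hUK] at this

/-- The case in which the target vertices are contained in every core with at least two
vertices, so that the neighbours of the source form a rather sparse set. -/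
lemma sparse (h : Inst G U A B d) (htwo : ∀ w, ∃ u ∈ U, (B u).Nonempty ∧ u ≠ w)
    (hmax : ∀ m K, 1 < m → IsCore G U A m K → ∀ u ∈ U, (B u).Nonempty → u ∈ K) :
    P d (Len G U A B) := by
  set T := U.filter (· ∈ A) with hT
  have memT : ∀ u, u ∈ T ↔ u ∈ U ∧ u ∈ A := by simp [hT]
  have hTU : T ⊆ U := Finset.filter_subset _ _
  have hcherry : ∀ u ∈ U, ∀ t1 ∈ T, ∀ t2 ∈ T, t1 ≠ t2 → G.Adj u t1 → G.Adj u t2 →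
      ∀ x ∈ U, (B x).Nonempty → x = u ∨ x = t1 ∨ x = t2 := by
    intro u hu t1 h1 t2 h2 hne ha1 ha2 x hx hb
    rw [memT] at h1 h2
    have hc : OddCore G U A {u} {t1, t2} := by
      refine ⟨by simpa using hu, ?_, by simp [ha1.ne, ha2.ne], ?_, ?_, ?_⟩
      · intro v hv
        simp only [Finset.mem_insert, Finset.mem_singleton] at hv
        rcases hv with rfl | rfl
        exacts [h1.1, h2.1]
      · simp [ha1.symm, ha2.symm]
      · simp [h1.2, h2.2]
      · rw [Finset.card_pair hne, Finset.card_singleton]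
    have := hmax 3 _ (by omega) (Or.inl ⟨_, _, hc, rfl, rfl⟩) x hx hb
    simp only [Finset.mem_union, Finset.mem_insert, Finset.mem_singleton] at this
    exact this
  have hedge : ∀ t ∈ T, ∀ v ∈ T, G.Adj t v → ∀ x ∈ U, (B x).Nonempty → x = v ∨ x = t := by
    intro t ht v hv ha x hx hb
    rw [memT] at ht hv
    have hc : OddCore G U A ∅ {t} :=
      ⟨by simp, by simpa using ht.1, by simp, by simp, by simpa using ht.2, by simp⟩
    have he := hc.extend hv.1 hv.2 (by simp [ha.ne']) (by simp [ha.symm])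
    simpa using hmax 2 _ (by omega) (Or.inr ⟨_, _, _, he, rfl, rfl⟩) x hx hb
  -- A core without edges loses nothing if each vertex of `X` has at most one neighbour in it.
  have hcore : ∀ T' ⊆ T, ∀ X, Disjoint T' X → (∀ u ∈ X, u ∉ A) →
      (∀ u ∈ X, ¬ ∃ t1 ∈ T', ∃ t2 ∈ T', t1 ≠ t2 ∧ G.Adj u t1 ∧ G.Adj u t2) →
      Core G T' X ∅ T' A := by
    intro T' hT' X hd hXA hadd
    refine ⟨hd, by simp, fun t ht => ((memT t).1 (hT' ht)).2, ⟨0, fun u hu => ?_, 0,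
      Or.inr fun j hj v hv => ?_⟩, Or.inl ⟨1, fun u hu _ => ?_, 0, Or.inr fun j hj v hv => ?_⟩⟩
    · rw [ind_false (hXA u hu)]
      by_cases hn : ∃ v ∈ T', G.Adj u v
      · rw [ind_true hn]
        have : dg G T' u ≤ 1 := by
          refine Finset.card_le_one.2 fun a ha b hb => ?_
          rw [Finset.mem_filter] at ha hb
          by_contra hne
          exact hadd u hu ⟨a, ha.1, b, hb.1, hne, ha.2, hb.2⟩
        omega
      · have : dg G T' u = 0 := dg_eq_zero fun v hv ha => hn ⟨v, hv, ha⟩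
        omega
    · obtain rfl : j = 0 := by omega
      exact ⟨v, ((memT v).1 (hT' hv)).2, .nil hv⟩
    · have : dg G ∅ u = 0 := dg_eq_zero (by simp)
      have := ind_le (u ∈ A)
      omega
    · simp at hv
  by_cases hBA : ∃ u ∈ U, u ∉ T ∧ (B u).Nonempty
  · obtain ⟨a, haU, haA⟩ := h.whole.1
    refine h.step (K := T) (S := ∅) (T := T) hTU ⟨a, (memT a).2 ⟨haU, haA⟩⟩
      (fun u => ∃ t1 ∈ T, ∃ t2 ∈ T, t1 ≠ t2 ∧ G.Adj u t1 ∧ G.Adj u t2) ?_ ?_ hBA ?_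
    · intro X hd hXU hadd
      exact hcore T subset_rfl X hd
        (fun u hu huA => Finset.disjoint_right.1 hd hu ((memT u).2 ⟨hXU hu, huA⟩)) hadd
    · rintro u hu - ⟨t1, h1, t2, h2, hne, ha1, ha2⟩ x hx hb
      rcases hcherry u hu t1 h1 t2 h2 hne ha1 ha2 x hx hb with rfl | rfl | rfl
      exacts [Or.inr rfl, Or.inl h1, Or.inl h2]
    · rintro w hwU hwT ⟨t1, h1, t2, h2, hne, ha1, ha2⟩ hBw hN
      have hwA : w ∉ A := fun hc => hwT ((memT w).2 ⟨hwU, hc⟩)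
      obtain ⟨x, hx, hbx, hxw⟩ := htwo w
      have hx12 := (hcherry w hwU t1 h1 t2 h2 hne ha1 ha2 x hx hbx).resolve_left hxw
      have hN2 : ∀ t ∈ U, G.Adj w t → t = t1 ∨ t = t2 := by
        intro t ht ha
        by_contra hcon
        rw [not_or] at hcon
        have c1 := (hcherry w hwU t (hN t ht ha) t1 h1 hcon.1 ha ha1 x hx hbx).resolve_left hxw
        have c2 := (hcherry w hwU t (hN t ht ha) t2 h2 hcon.2 ha ha2 x hx hbx).resolve_left hxw
        rcases hx12 with rfl | rfl
        · rcases c2 with rfl | rfl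
          · exact hcon.1 rfl
          · exact hne rfl
        · rcases c1 with rfl | rfl
          · exact hcon.2 rfl
          · exact hne rfl
      have hdw : dg G U w ≤ 2 := by
        refine (Finset.card_le_card (t := {t1, t2}) fun v hv => ?_).trans Finset.card_le_two
        rw [Finset.mem_filter] at hv
        simpa using hN2 v hv.1 hv.2
      have hd4 : d ≤ 4 := by
        have h3 := h.deg w hwU
        have h4 := h.offs.card_le w
        rw [ind_false hwA] at h3
        omega
      -- the paths `x` and `t, w, x`, where `{x, t} = {t1, t2}`
      have fin : ∀ t ∈ T, t ≠ x → x ∈ T → G.Adj w x → G.Adj w t → P d (Len G U A B) := by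
        intro t ht htx hxT hwx hwt
        obtain ⟨o, ho⟩ := hbx
        rw [memT] at ht hxT
        refine P.of_four o hd4 ⟨x, hxT.2, x, 0, o, ho, .nil hx, by omega⟩
          ⟨t, ht.2, x, 2, o, ho, ?_, by omega⟩
        refine .cons ht.1 hwt.symm (.cons ?_ hwx (.nil ?_))
        · exact Finset.mem_erase.2 ⟨hwt.ne, hwU⟩
        · exact Finset.mem_erase.2 ⟨hwx.ne', Finset.mem_erase.2 ⟨htx.symm, hx⟩⟩
      rcases hx12 with rfl | rfl
      · exact fin t2 h2 hne.symm h1 ha1 ha2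
      · exact fin t1 h1 hne h2 ha2 ha1
  · push Not at hBA
    obtain ⟨w, hwU, hBw⟩ := h.whole.2
    have hBT : ∀ u ∈ U, (B u).Nonempty → u ∈ T := by
      intro u hu hb
      by_contra hc
      exact hb.ne_empty (hBA u hu hc)
    have hwT := hBT w hwU hBw
    by_cases hn : ∃ u ∈ U \ T, G.Adj u w
    · refine (hcore (T.erase w) (Finset.erase_subset _ _) (U \ T)
        (Finset.disjoint_sdiff.mono_left (Finset.erase_subset _ _)) ?_ ?_).beta hwU ?_ h.two_le
        h.conn h.deg h.ih hBw ?_ hn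
      · intro u hu huA
        rw [Finset.mem_sdiff] at hu
        exact hu.2 ((memT u).2 ⟨hu.1, huA⟩)
      · rintro u hu ⟨t1, h1, t2, h2, hne, ha1, ha2⟩
        rw [Finset.mem_sdiff] at hu
        rw [Finset.mem_erase] at h1 h2
        rcases hcherry u hu.1 t1 h1.2 t2 h2.2 hne ha1 ha2 w hwU hBw with rfl | rfl | rfl
        exacts [hu.2 hwT, h1.1 rfl, h2.1 rfl]
      · ext u
        simp only [Finset.mem_erase, Finset.mem_union, Finset.mem_sdiff]
        constructor
        · rintro ⟨h1, h2⟩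
          by_cases hu : u ∈ T
          · exact Or.inl ⟨h1, hu⟩
          · exact Or.inr ⟨h2, hu⟩
        · rintro (hu | hu)
          · exact ⟨hu.1, hTU hu.2⟩
          · exact ⟨fun e => hu.2 (e ▸ hwT), hu.1⟩
      · intro u hu hb
        rw [Finset.mem_sdiff] at hu
        exact hu.2 (hBT u hu.1 hb)
    · push Not at hn
      have hN : ∀ u ∈ U, G.Adj w u → u ∈ T := by
        intro u hu ha
        by_contra hc
        exact hn u (Finset.mem_sdiff.2 ⟨hu, hc⟩) ha.symm
      have hwA := ((memT w).1 hwT).2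
      by_cases ht : ∃ t ∈ U, G.Adj w t
      · obtain ⟨t, htU, hat⟩ := ht
        have htT := hN t htU hat
        obtain ⟨x, hx, hbx, hxw⟩ := htwo w
        have hone : dg G U w ≤ 1 := by
          refine Finset.card_le_one.2 fun a ha b hb => ?_
          rw [Finset.mem_filter] at ha hb
          have ea := (hedge w hwT a (hN a ha.1 ha.2) ha.2 x hx hbx).resolve_right hxw
          have eb := (hedge w hwT b (hN b hb.1 hb.2) hb.2 x hx hbx).resolve_right hxw
          rw [← ea, ← eb]
        have h1 := h.deg w hwU
        rw [ind_true hwA] at h1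
        refine h.explicit hBw (e := 3) (by omega) (P.of_three 0 le_rfl ⟨w, hwA, .nil hwU⟩
          ⟨t, ((memT t).1 htT).2, .cons htU hat.symm (.nil ?_)⟩) (by omega)
        exact Finset.mem_erase.2 ⟨hat.ne, hwU⟩
      · push Not at ht
        exact h.isolated hwU hBw (dg_eq_zero ht)

/-- A vertex `w ∈ A` attached to the target, all of whose neighbours lie in a core `K` with `m`
vertices, when the paths through `K` to `w` are rich enough. -/
lemma inside (h : Inst G U A B d) {K : Finset V} {w : V} {m : ℕ} (hw : w ∈ U)
    (hBw : (B w).Nonempty) (hK : K.card = m) (hN : ∀ u ∈ U, G.Adj w u → u ∈ K)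
    (hP : P (m + 2) fun l => ∃ a ∈ A, PL G U a w l) : P d (Len G U A B) := by
  refine h.explicit hBw (by omega) hP ?_
  have h1 := h.deg w hw
  have h2 : dg G U w ≤ dg G K w := dg_le_of hN
  have h3 := dg_le_card (G := G) K w
  have := ind_le (w ∈ A)
  omega

lemma odd (h : Inst G U A B d) {S T : Finset V} (hc : OddCore G U A S T) (hr : 1 ≤ S.card)
    (hsupp : ∃ u ∈ U, u ∉ S ∪ T ∧ (B u).Nonempty)
    (hmax : ∀ m K, 2 * S.card + 1 < m → IsCore G U A m K → ∀ u ∈ U, (B u).Nonempty → u ∈ K) :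
    P d (Len G U A B) := by
  have hTne : T.Nonempty := Finset.card_pos.1 (by have := hc.card; omega)
  refine h.step (K := S ∪ T) (S := S) (T := T) hc.subU (hTne.mono Finset.subset_union_right)
    (fun u => u ∈ A ∧ ∀ x ∈ S ∪ T, G.Adj u x) (fun X hX _ hadd => hc.core hr hX hadd) ?_ hsupp ?_
  · rintro u hu huK ⟨huA, ha⟩ x hx hb
    have := hmax (2 * S.card + 2) _ (by omega)
      (Or.inr ⟨S, T, u, hc.extend hu huA huK ha, rfl, rfl⟩) x hx hb
    rw [Finset.mem_insert] at this
    exact this.symm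
  · rintro w hw hwK ⟨hwA, ha⟩ hBw hN
    refine h.inside hw hBw hc.card_union hN ⟨0, Or.inl fun i hi => ?_⟩
    have hsub : S ∪ T ⊆ U := hc.subU
    rcases Nat.eq_zero_or_pos i with rfl | hi0
    · exact ⟨w, hwA, .nil hw⟩
    obtain ⟨j, hj | hj⟩ := Nat.even_or_odd' i
    · obtain ⟨s, hs⟩ : S.Nonempty := Finset.card_pos.1 hr
      obtain ⟨a, haT, hp⟩ := hc.lenS (j := j - 1) (by omega) s hs
      refine ⟨a, hc.subA a haT, ?_⟩
      rw [show 0 + i = 2 * (j - 1) + 1 + 1 by omega]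
      exact hp.snoc (ha s (Finset.mem_union_left _ hs)).symm hwK hsub hw
    · obtain ⟨t, ht⟩ := hTne
      obtain ⟨a, haT, hp⟩ := hc.lenT (j := j) (by omega) t ht
      refine ⟨a, hc.subA a haT, ?_⟩
      rw [show 0 + i = 2 * j + 1 by omega]
      exact hp.snoc (ha t (Finset.mem_union_right _ ht)).symm hwK hsub hw

lemma even_inside (h : Inst G U A B d) {S T : Finset V} {v : V} (hc : EvenCore G U A S T v)
    {w : V} (hw : w ∈ U) (hwK : w ∉ insert v (S ∪ T)) (hwA : w ∈ A)
    (ha : ∀ x ∈ insert v S, G.Adj w x) (hBw : (B w).Nonempty)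
    (hN : ∀ u ∈ U, G.Adj w u → u ∈ insert v (S ∪ T)) : P d (Len G U A B) := by
  have he := hc.extend hw hwA hwK ha
  refine h.inside hw hBw hc.card_K hN ⟨0, Or.inr fun i hi => ?_⟩
  have hS : (insert v S).card = S.card + 1 :=
    Finset.card_insert_of_notMem fun hv => hc.not_mem (Finset.mem_union_left _ hv)
  obtain ⟨a, haT, hp⟩ := he.lenT (j := i) (by omega) w (Finset.mem_insert_self _ _)
  exact ⟨a, he.subA a haT, by rw [Nat.zero_add]; exact hp.mono he.subU⟩

lemma even_max {S T : Finset V} {v : V} (hc : EvenCore G U A S T v)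
    (hmax : ∀ m K, 2 * S.card + 2 < m → IsCore G U A m K → ∀ u ∈ U, (B u).Nonempty → u ∈ K)
    {u : V} (hu : u ∈ U) (huK : u ∉ insert v (S ∪ T)) (huA : u ∈ A)
    (ha : ∀ x ∈ insert v S, G.Adj u x) :
    ∀ u' ∈ U, (B u').Nonempty → u' ∈ insert v (S ∪ T) ∨ u' = u := by
  intro x hx hb
  have hS : (insert v S).card = S.card + 1 :=
    Finset.card_insert_of_notMem fun hv => hc.not_mem (Finset.mem_union_left _ hv)
  have := hmax (2 * S.card + 3) _ (by omega)
    (Or.inl ⟨_, _, hc.extend hu huA huK ha, rfl, by omega⟩) x hx hb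
  simp only [Finset.mem_union, Finset.mem_insert] at this ⊢
  tauto

lemma even (h : Inst G U A B d) {S T : Finset V} {v : V} (hc : EvenCore G U A S T v)
    (hsupp : ∃ u ∈ U, u ∉ insert v (S ∪ T) ∧ (B u).Nonempty)
    (hmax : ∀ m K, 2 * S.card + 2 < m → IsCore G U A m K → ∀ u ∈ U, (B u).Nonempty → u ∈ K) :
    P d (Len G U A B) := by
  rcases Nat.eq_zero_or_pos S.card with h0 | hr
  · obtain rfl := Finset.card_eq_zero.1 h0
    obtain ⟨t, rfl⟩ := Finset.card_eq_one.1 (show T.card = 1 by rw [hc.card]; simp)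
    have htv : G.Adj t v := hc.adj t (by simp)
    have htA : t ∈ A := hc.subA t (by simp)
    have htU : t ∈ U := hc.subT (by simp)
    -- the same core with the two vertices exchanged
    have hc' : EvenCore G U A ∅ {v} t :=
      ⟨⟨by simp, by simpa using hc.memU, by simp, by simp, by simpa using hc.memA, by simp⟩,
        htU, htA, by simp [htv.ne], by simp [htv.symm]⟩
    have hK : insert v (∅ ∪ {t}) = ({t, v} : Finset V) := by ext; simp; tauto
    have hK' : insert t (∅ ∪ {v}) = ({t, v} : Finset V) := by ext; simp
    rw [hK] at hsupp
    refine h.step (K := {t, v}) (S := ∅) (T := {t, v}) (hK ▸ hc.subU') (by simp)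
      (fun u => u ∈ A ∧ (G.Adj u t ∨ G.Adj u v))
      (fun X hX _ hadd => core_two htv htA hc.memA hX hadd) ?_ hsupp ?_
    · rintro u hu huK ⟨huA, ha | ha⟩
      · rw [← hK'] at huK ⊢
        exact even_max hc' hmax hu huK huA (by simpa using ha)
      · rw [← hK] at huK ⊢
        exact even_max hc hmax hu huK huA (by simpa using ha)
    · rintro w hw hwK ⟨hwA, ha | ha⟩ hBw hN
      · rw [← hK'] at hwK hN
        exact h.even_inside hc' hw hwK hwA (by simpa using ha) hBw hN
      · rw [← hK] at hwK hN
        exact h.even_inside hc hw hwK hwA (by simpa using ha) hBw hN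
  · exact h.step (K := insert v (S ∪ T)) (S := insert v S) (T := T) hc.subU' (by simp)
      (fun u => u ∈ A ∧ ∀ x ∈ insert v S, G.Adj u x)
      (fun X hX _ hadd => hc.core hr hX hadd)
      (fun u hu huK ha => even_max hc hmax hu huK ha.1 ha.2) hsupp
      (fun w hw hwK ha hBw hN => h.even_inside hc hw hwK ha.1 ha.2 hBw hN)

lemma solve (h : Inst G U A B d) : P d (Len G U A B) := by
  by_cases htwo : ∀ w, ∃ u ∈ U, (B u).Nonempty ∧ u ≠ w
  · -- a largest core not containing all target vertices
    let p : ℕ → Prop := fun m => ∃ K, IsCore G U A m K ∧ ∃ u ∈ U, u ∉ K ∧ (B u).Nonempty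
    have hbound : ∀ m K, IsCore G U A m K → m ≤ U.card := by
      rintro m K (⟨S, T, hc, rfl, rfl⟩ | ⟨S, T, v, hc, rfl, rfl⟩)
      · rw [← hc.card_union]; exact Finset.card_le_card hc.subU
      · rw [← hc.card_K]; exact Finset.card_le_card hc.subU'
    have hp1 : p 1 := by
      obtain ⟨a, haU, haA⟩ := h.whole.1
      obtain ⟨u, hu, hb, hne⟩ := htwo a
      refine ⟨{a}, Or.inl ⟨∅, {a}, ?_, by simp, by simp⟩, u, hu, by simpa using hne, hb⟩
      exact ⟨by simp, by simpa using haU, by simp, by simp, by simpa using haA, by simp⟩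
    have hp := Nat.findGreatest_spec (P := p) (n := U.card)
      (by obtain ⟨K, hK, -⟩ := hp1; exact hbound 1 K hK) hp1
    have hmax : ∀ m K, Nat.findGreatest p U.card < m → IsCore G U A m K →
        ∀ u ∈ U, (B u).Nonempty → u ∈ K := by
      intro m K hm hK u hu hb
      by_contra huK
      exact Nat.findGreatest_is_greatest hm (hbound m K hK) ⟨K, hK, u, hu, huK, hb⟩
    revert hp hmax
    generalize Nat.findGreatest p U.card = m
    rintro ⟨K, ⟨S, T, hc, rfl, rfl⟩ | ⟨S, T, v, hc, rfl, rfl⟩, hsupp⟩ hmax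
    · rcases Nat.eq_zero_or_pos S.card with h0 | hr
      · rw [h0] at hmax
        exact h.sparse htwo hmax
      · exact h.odd hc hr hsupp hmax
    · exact h.even hc hsupp hmax
  · push Not at htwo
    obtain ⟨w, hw⟩ := htwo
    obtain ⟨u, hu, hb⟩ := h.whole.2
    obtain rfl := hw u hu hb
    exact h.single hu hb hw

end Inst

theorem W_all (G : SimpleGraph V) (U : Finset V) : W G U := by
  induction U using Finset.strongInduction with
  | H U ih =>
    intro A B d hB hne hC hd hdeg
    exact Inst.solve ⟨hB, hd, hne, hC, hdeg, ih⟩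

end Induction

end KPaths

namespace KPaths

section Deduction

variable {V : Type*} [Fintype V] {G : SimpleGraph V} {x y : V}

/-! ### The theorem from the induction statement -/

/-- In a rooted 2-connected graph, no single vertex `c` separates a set `D` from the roots. -/
lemma exists_exit (h : RootedTwoConnected G x y) {D : Finset V} (hne : D.Nonempty)
    (hx : x ∉ D) (hy : y ∉ D) {c : V} (hc : c ∉ D) :
    ∃ z, z ∉ D ∧ z ≠ c ∧ ∃ u ∈ D, G.Adj u z := by
  obtain ⟨u, hu⟩ := hne
  obtain ⟨r, hrD, hrc⟩ : ∃ r, r ∉ D ∧ r ≠ c := by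
    by_cases hxc : x = c
    · exact ⟨y, hy, fun e => h.1 (hxc.trans e.symm)⟩
    · exact ⟨x, hx, hxc⟩
  have huc : u ≠ c := fun e => hc (e ▸ hu)
  obtain ⟨p⟩ := (h.2.2.2 c).preconnected ⟨u, huc⟩ ⟨r, hrc⟩
  obtain ⟨e, -, h1, h2⟩ := p.exists_boundary_dart {v | v.1 ∈ D} hu hrD
  refine ⟨e.snd.1, h2, e.snd.2, e.fst.1, h1, ?_⟩
  have ha := e.adj
  rw [SimpleGraph.comap_adj, SimpleGraph.sup_adj] at ha
  rcases ha with ha | ha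
  · exact ha
  · -- the extra edge `xy` does not meet `D`
    rw [SimpleGraph.fromEdgeSet_adj, Set.mem_singleton_iff, Sym2.eq_iff] at ha
    have h1' : e.fst.1 ∈ D := h1
    rcases ha.1 with ⟨h3, -⟩ | ⟨h3, -⟩
    · exact absurd h1' (by rw [show e.fst.1 = x from h3]; exact hx)
    · exact absurd h1' (by rw [show e.fst.1 = y from h3]; exact hy)

open scoped Classical

lemma conn_of_rooted (h : RootedTwoConnected G x y) :
    Conn G ((Finset.univ.erase y).erase x) {u | G.Adj u x} (nT G y) := by
  intro D hD hne
  have hx : x ∉ D := fun hc => by simpa using hD hc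
  have hy : y ∉ D := fun hc => by simpa using hD hc
  have hsplit : ∀ z, z ∉ D → (∃ u ∈ D, G.Adj u z) →
      z = x ∨ z = y ∨ z ∈ bd G ((Finset.univ.erase y).erase x) D := by
    intro z hz hu
    by_cases hzx : z = x
    · exact Or.inl hzx
    by_cases hzy : z = y
    · exact Or.inr (Or.inl hzy)
    exact Or.inr (Or.inr (mem_bd.2 ⟨by simp [hzx, hzy], hz, hu⟩))
  have hA : (∃ u ∈ D, G.Adj u x) → ind (∃ u ∈ D, u ∈ {u | G.Adj u x}) = 1 := fun h => ind_true h
  have hB : (∃ u ∈ D, G.Adj u y) → ind (∃ u ∈ D, (nT G y u).Nonempty) = 1 := by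
    rintro ⟨u, hu, ha⟩
    exact ind_true ⟨u, hu, nT_nonempty.2 ha⟩
  obtain ⟨z, hzD, hzx, hz⟩ := exists_exit h hne hx hy hx
  obtain ⟨z', hzD', hzz, hz'⟩ := exists_exit h hne hx hy hzD
  rcases hsplit z hzD hz with e | e | e
  · exact absurd e hzx
  · subst e
    have := hB hz
    rcases hsplit z' hzD' hz' with e | e | e
    · subst e
      have := hA hz'
      omega
    · exact absurd e hzz
    · have := Finset.card_pos.2 ⟨z', e⟩
      omega
  · have := Finset.card_pos.2 ⟨z, e⟩
    rcases hsplit z' hzD' hz' with e' | e' | e'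
    · subst e'
      have := hA hz'
      omega
    · subst e'
      have := hB hz'
      omega
    · have := Finset.one_lt_card.2 ⟨z, e, z', e', hzz.symm⟩
      omega

lemma degree_le (v : V) [Fintype (G.neighborSet v)] :
    G.degree v ≤ dg G ((Finset.univ.erase y).erase x) v + ind (G.Adj v x) + (nT G y v).card := by
  have h1 : G.degree v = dg G Finset.univ v := by
    rw [← SimpleGraph.card_neighborFinset_eq_degree]
    unfold dg
    congr 1
    ext w
    simp
  have h2 := dg_le_ind (G := G) (U := Finset.univ) (U' := Finset.univ.erase y) (u := v) (c := y)
    fun w _ _ => by by_cases e : w = y <;> simp [e]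
  have h3 := dg_le_ind (G := G) (U := Finset.univ.erase y)
    (U' := (Finset.univ.erase y).erase x) (u := v) (c := x)
    fun w hw _ => by
      by_cases e : w = x
      · exact Or.inr e
      · exact Or.inl (Finset.mem_erase.2 ⟨e, hw⟩)
  rw [nT_card]
  omega

/-- The lengths of the instance are the lengths of the `x`-`y` paths, diminished by `2`. -/
lemma walk_of_len (hxy : x ≠ y) {l : ℕ}
    (h : Len G ((Finset.univ.erase y).erase x) {u | G.Adj u x} (nT G y) l) :
    ∃ p : G.Walk x y, p.IsPath ∧ p.length = l + 2 := by
  obtain ⟨a, ha, b, n, o, ho, hp, rfl⟩ := h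
  obtain ⟨rfl, hb⟩ := mem_nT.1 ho
  obtain ⟨p, hp, -, hl⟩ := ((hp.prep (U := Finset.univ.erase y) (show G.Adj a x from ha).symm (by simp)
    (Finset.erase_subset _ _) (by simp [hxy])).snoc (U := Finset.univ) hb (by simp)
    (Finset.erase_subset _ _) (by simp)).exists_walk
  exact ⟨p, hp, by omega⟩

lemma exists_lengths (h : RootedTwoConnected G x y) {d : ℕ}
    (hdeg : ∀ v : V, v ≠ x → v ≠ y → d ≤ G.degree v) :
    P (max 2 d) fun l => ∃ p : G.Walk x y, p.IsPath ∧ p.length = l + 2 := by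
  have hU : ((Finset.univ.erase y).erase x).Nonempty := by
    have h3 := h.2.2.1
    rw [← Finset.card_pos, Finset.card_erase_of_mem (by simp [h.1]),
      Finset.card_erase_of_mem (by simp), Finset.card_univ]
    omega
  refine P.mono ?_ fun l hl => walk_of_len h.1 hl
  refine (W_all G _).apply 0 (nT_offs y) hU (conn_of_rooted h) fun u hu => ?_
  simp only [Finset.mem_erase, Finset.mem_univ, and_true] at hu
  exact (hdeg u hu.1 hu.2).trans (degree_le u)

end Deduction

end KPaths

/-- If `(G, x, y)` is a 2-connected rooted graph in which every vertex other than
`x` and `y` has degree at least `2k − 1`, then `G` contains `k` paths from `x` to `y`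
satisfying the length condition or the semi-length condition. -/
theorem k_paths_length_or_semilength {V : Type*} [Fintype V] (k : ℕ) (hk : 0 < k)
    (G : SimpleGraph V) [DecidableRel G.Adj] (x y : V)
    (hroot : RootedTwoConnected G x y)
    (hdeg : ∀ v : V, v ≠ x → v ≠ y → 2 * k - 1 ≤ G.degree v) :
    ∃ p : ℕ → G.Walk x y,
      (∀ i, 1 ≤ i → i ≤ k → (p i).IsPath) ∧
      (LengthSeq k (fun i => (p i).length) ∨
       SemiLengthSeq k (fun i => (p i).length)) := by
  classical
  have hP := KPaths.exists_lengths hroot (d := 2 * k - 1) fun v hx hy => by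
    convert hdeg v hx hy
  -- the paths can be chosen once the sequence of lengths is known
  have key : ∀ f : ℕ → ℕ, (∀ i, 1 ≤ i → i ≤ k → ∃ p : G.Walk x y, p.IsPath ∧ p.length = f i) →
      ∃ p : ℕ → G.Walk x y, ∀ i, 1 ≤ i → i ≤ k → (p i).IsPath ∧ (p i).length = f i := by
    intro f hf
    obtain ⟨p1, -⟩ := hf 1 le_rfl hk
    have : ∀ i, ∃ p : G.Walk x y, 1 ≤ i → i ≤ k → p.IsPath ∧ p.length = f i := by
      intro i
      by_cases hi : 1 ≤ i ∧ i ≤ k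
      · obtain ⟨p, hp⟩ := hf i hi.1 hi.2
        exact ⟨p, fun _ _ => hp⟩
      · exact ⟨p1, fun h1 h2 => absurd ⟨h1, h2⟩ hi⟩
    choose p hp using this
    exact ⟨p, hp⟩
  obtain ⟨l, h | h⟩ := hP
  · -- consecutive lengths: use `l, l + 1, l + 3, l + 5, …`
    obtain ⟨p, hp⟩ := key (fun i => if i = 1 then l + 2 else l + 2 * i - 3 + 2) fun i h1 h2 => by
      by_cases hi : i = 1
      · simpa [hi] using h 0 (by omega)
      · have := h (2 * i - 3) (by omega)
        simp only [if_neg hi]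
        rwa [show l + 2 * i - 3 = l + (2 * i - 3) by omega]
    have hp1 : (p 1).length = l + 2 := by simpa using (hp 1 le_rfl hk).2
    have hpi : ∀ i, 2 ≤ i → i ≤ k → (p i).length = l + 2 * i - 3 + 2 := fun i h1 h2 => by
      have := (hp i (by omega) h2).2
      rwa [if_neg (by omega)] at this
    refine ⟨p, fun i h1 h2 => (hp i h1 h2).1, ?_⟩
    rcases Nat.lt_or_ge 1 k with hk2 | hk1
    · refine Or.inr ⟨by simp only [hp1]; omega, 1, le_rfl, by omega, fun i h1 h2 => by omega,
        ?_, fun i h1 h2 => ?_⟩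
      · have : (p (1 + 1)).length = _ := hpi 2 le_rfl hk2
        simp only [hp1]
        omega
      · have h3 := hpi i h1 (by omega)
        have h4 := hpi (i + 1) (by omega) (by omega)
        simp only [h3, h4]
        omega
    · exact Or.inl ⟨by simp only [hp1]; omega, fun i h1 h2 => by omega⟩
  · obtain ⟨p, hp⟩ := key (fun i => l + 2 * (i - 1) + 2) fun i h1 h2 => h (i - 1) (by omega)
    have hpi : ∀ i, 1 ≤ i → i ≤ k → (p i).length = l + 2 * (i - 1) + 2 :=
      fun i h1 h2 => (hp i h1 h2).2
    refine ⟨p, fun i h1 h2 => (hp i h1 h2).1, Or.inl ⟨?_, fun i h1 h2 => ?_⟩⟩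
    · have := hpi 1 le_rfl hk
      simp only [this]
      omega
    · have h3 := hpi i h1 (by omega)
      have h4 := hpi (i + 1) (by omega) (by omega)
      simp only [h3, h4]
      omega
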